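/- Under the hypotheses of combinatorial tuning, if λ₀ and every λ_v are post-critically finite rational laminations (all Julia critical elements are contained in Q/Z, i.e., every finite critical unlinked class is absent), then the combinatorial tuning λ' = T_α(λ₀,(λ_v)) is post-critically finite; moreover if λ₀ and (λ_v) are hyperbolic (no Julia critical elements), then λ' is hyperbolic. -/

import Mathlib

noncomputable section
open Set Function

/-- The circle `ℝ/ℤ`. -/
abbrev Circle1 := AddCircle (1 : ℝ)

/-- Multiplication by `d` on the circle. -/
def md (d : ℕ) (x : Circle1) : Circle1 := d • x

/-- The rational angles `ℚ/ℤ ⊆ ℝ/ℤ`. -/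
def ratC : Set Circle1 := {x | ∃ q : ℚ, x = ((q : ℝ) : Circle1)}

/-- `A` and `B` are unlinked: `B` is contained in a single connected
component of the complement of `A`. -/
def Unlinked (A B : Set Circle1) : Prop :=
  ∃ x ∈ Aᶜ, B ⊆ connectedComponentIn Aᶜ x

/-- `C` is a connected component of `S`. -/
def IsCompOf (C S : Set Circle1) : Prop :=
  ∃ x ∈ S, C = connectedComponentIn S x

/-- The class of `x` under a relation `r`. -/
def relClass (r : Circle1 → Circle1 → Prop) (x : Circle1) : Set Circle1 := {y | r x y}

/-- A rational lamination: a closed equivalence relation on `ℚ/ℤ` with finite,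
pairwise unlinked classes. -/
structure RatLam where
  rel : Circle1 → Circle1 → Prop
  rel_rat : ∀ x y, rel x y → x ∈ ratC ∧ y ∈ ratC
  refl : ∀ x ∈ ratC, rel x x
  symm : ∀ x y, rel x y → rel y x
  trans : ∀ x y z, rel x y → rel y z → rel x z
  closed' : ∀ x ∈ ratC, ∀ y ∈ ratC,
    (x, y) ∈ closure {p : Circle1 × Circle1 | rel p.1 p.2} → rel x y
  finiteClass : ∀ x, (relClass rel x).Finite
  unlinkedClass : ∀ x y, ¬ rel x y → Unlinked (relClass rel x) (relClass rel y)

/-- `m_d` maps `A` onto `B` in a consecutive-preserving way: the image of `A` is `B`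
and the connected components of the complement of `A` are sent to components of the
complement of `B` endpoint-wise. -/
def ConsecutiveImage (d : ℕ) (A B : Set Circle1) : Prop :=
  md d '' A = B ∧
    ∀ C, IsCompOf C Aᶜ → ∃ C', IsCompOf C' Bᶜ ∧ frontier C' = md d '' frontier C

/-- A `d`-invariant rational lamination. -/
structure InvRatLam (d : ℕ) extends RatLam where
  invariant : ∀ x ∈ ratC,
    ConsecutiveImage d (relClass rel x) (relClass rel (md d x))

/-- `m_d : A → m_d(A)` is `δ`-to-one. -/
def classDeg (d : ℕ) (A : Set Circle1) (δ : ℕ) : Prop :=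
  ∀ y ∈ md d '' A, Set.ncard {x | x ∈ A ∧ md d x = y} = δ

/-- The `λ`-unlinked relation on irrational angles: `θ ~ θ'` iff they lie in the same
connected component of the complement of every `λ`-class. -/
def UnlRel (r : Circle1 → Circle1 → Prop) (θ θ' : Circle1) : Prop :=
  θ ∉ ratC ∧ θ' ∉ ratC ∧
    (θ = θ' ∨ ∀ x ∈ ratC, θ' ∈ connectedComponentIn (relClass r x)ᶜ θ)

/-- `L` is a `λ`-unlinked class. -/
def IsUnlClass (r : Circle1 → Circle1 → Prop) (L : Set Circle1) : Prop :=
  ∃ θ, θ ∉ ratC ∧ L = {θ' | UnlRel r θ θ'}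

/-- The real extension `λ̂`: the smallest equivalence relation containing the closure
of `λ` in `(ℝ/ℤ)²`. -/
def realExt (r : Circle1 → Circle1 → Prop) : Circle1 → Circle1 → Prop :=
  Relation.EqvGen (fun a b => (a, b) ∈ closure {p : Circle1 × Circle1 | r p.1 p.2})

/-- `A` is a class of the real extension `λ̂` of `r`. -/
def IsRealClass (r : Circle1 → Circle1 → Prop) (A : Set Circle1) : Prop :=
  ∃ x, A = {y | realExt r x y}

/-- A Julia critical element: a `λ̂`-class on which `m_d` is not injective. -/
def JuliaCritElem (d : ℕ) (r : Circle1 → Circle1 → Prop) (A : Set Circle1) : Prop :=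
  IsRealClass r A ∧ ¬ Set.InjOn (md d) A

/-- A Fatou critical element: an infinite `λ`-unlinked class on which `m_d` is not
injective (i.e. of degree `> 1`). -/
def FatouCritElem (d : ℕ) (r : Circle1 → Circle1 → Prop) (L : Set Circle1) : Prop :=
  IsUnlClass r L ∧ L.Infinite ∧ ¬ Set.InjOn (md d) L

/-- A critical element of `λ`. -/
def CritElem (d : ℕ) (r : Circle1 → Circle1 → Prop) (C : Set Circle1) : Prop :=
  JuliaCritElem d r C ∨ FatouCritElem d r C

/-- The base relation for combinatorial tuning: `λ₀` together with the pull-backs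
`λ*_w = π_w^*(λ_{w'})` over all infinite `λ₀`-unlinked classes `w`, where
`w' = m_d^{n_w}(w)` is the first forward image lying in the set `V` of Fatou critical
elements and `π_w = α_{w'} ∘ m_d^{n_w}`. -/
def tuningBase (d : ℕ) (lam0 : InvRatLam d) (V : Set (Set Circle1))
    (α : Set Circle1 → Circle1 → Circle1) (lamv : Set Circle1 → RatLam)
    (x y : Circle1) : Prop :=
  lam0.rel x y ∨
    ∃ (w : Set Circle1) (n : ℕ),
      IsUnlClass lam0.rel w ∧ w.Infinite ∧
      (md d)^[n] '' w ∈ V ∧ (∀ j < n, (md d)^[j] '' w ∉ V) ∧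
      x ∈ closure w ∧ y ∈ closure w ∧ x ∈ ratC ∧ y ∈ ratC ∧
      (lamv ((md d)^[n] '' w)).rel
        (α ((md d)^[n] '' w) ((md d)^[n] x)) (α ((md d)^[n] '' w) ((md d)^[n] y))

/-- The combinatorial tuning `T_α(λ₀, (λ_v))`: the smallest equivalence relation on
`ℚ/ℤ` containing `λ₀` and all the pull-backs `λ*_w`. -/
def tuningRel (d : ℕ) (lam0 : InvRatLam d) (V : Set (Set Circle1))
    (α : Set Circle1 → Circle1 → Circle1) (lamv : Set Circle1 → RatLam)
    (x y : Circle1) : Prop :=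
  x ∈ ratC ∧ y ∈ ratC ∧ Relation.EqvGen (tuningBase d lam0 V α lamv) x y

/-- Hypotheses of the combinatorial tuning theorem: `V` is the set of Fatou critical
elements of `λ₀`; `ret` gives the first-return times to `V`; `δf` gives the degrees;
`α` is an internal angle system; `lamv` is an invariant rational lamination over the
reduced mapping schema of `λ₀`. -/
structure TuningData (d : ℕ) (lam0 : InvRatLam d) where
  V : Set (Set Circle1)
  hV : ∀ L : Set Circle1, L ∈ V ↔ FatouCritElem d lam0.rel L
  ret : Set Circle1 → ℕ
  δf : Set Circle1 → ℕ
  α : Set Circle1 → Circle1 → Circle1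
  lamv : Set Circle1 → RatLam
  hret : ∀ v ∈ V, 0 < ret v ∧ (md d)^[ret v] '' v ∈ V ∧
    ∀ j, 0 < j → j < ret v → (md d)^[j] '' v ∉ V
  hδ : ∀ v ∈ V, classDeg d v (δf v)
  -- `α_v` induces a homeomorphism `closure(v)/λ̂₀ → ℝ/ℤ`:
  hα_cont : ∀ v ∈ V, ContinuousOn (α v) (closure v)
  hα_surj : ∀ v ∈ V, Set.SurjOn (α v) (closure v) Set.univ
  hα_fib : ∀ v ∈ V, ∀ x ∈ closure v, ∀ y ∈ closure v,
    (α v x = α v y ↔ realExt lam0.rel x y)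
  -- equivariance `α_{σ(v)}(m_d^{ℓ_v} θ) = δ(v)·α_v(θ)`:
  hα_equiv : ∀ v ∈ V, ∀ θ ∈ closure v,
    α ((md d)^[ret v] '' v) ((md d)^[ret v] θ) = md (δf v) (α v θ)
  -- `(λ_v)` is an invariant rational lamination over the reduced schema:
  hlam_inv : ∀ v ∈ V, ∀ x ∈ ratC,
    ConsecutiveImage (δf v) (relClass (lamv v).rel x)
      (relClass (lamv ((md d)^[ret v] '' v)).rel (md (δf v) x))

/-- A rational lamination is hyperbolic if it has no Julia critical element. -/
def HyperbolicLam (d : ℕ) (r : Circle1 → Circle1 → Prop) : Prop :=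
  ∀ A : Set Circle1, IsRealClass r A → Set.InjOn (md d) A

/-- A rational lamination is post-critically finite if every Julia critical element is
contained in `ℚ/ℤ`. -/
def PCFLam (d : ℕ) (r : Circle1 → Circle1 → Prop) : Prop :=
  ∀ A : Set Circle1, IsRealClass r A → ¬ Set.InjOn (md d) A → A ⊆ ratC

section Proofs
open Topology

abbrev cc (t : ℝ) : Circle1 := (t : Circle1)

lemma cc_cont : Continuous cc := AddCircle.continuous_mk' 1

lemma cc_open : IsOpenMap cc := QuotientAddGroup.isOpenMap_coe

lemma cc_eq_iff {s t : ℝ} : cc s = cc t ↔ ∃ n : ℤ, t = s + n := by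
  unfold cc
  rw [eq_comm, ← sub_eq_zero, ← AddCircle.coe_sub, AddCircle.coe_eq_zero_iff]
  constructor
  · rintro ⟨n, hn⟩; exact ⟨n, by simp at hn; linarith⟩
  · rintro ⟨n, hn⟩; exact ⟨n, by simp; linarith⟩

lemma cc_add_int (s : ℝ) (n : ℤ) : cc (s + n) = cc s := (cc_eq_iff.2 ⟨n, rfl⟩).symm
lemma cc_add_one (s : ℝ) : cc (s + 1) = cc s := by have := cc_add_int s 1; simp

lemma cc_inj {s t : ℝ} (h : cc s = cc t) (h1 : |s - t| < 1) : s = t := by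
  obtain ⟨n, rfl⟩ := cc_eq_iff.1 h
  have h2 : |(n : ℝ)| < 1 := by simpa using h1
  have : |n| < 1 := by exact_mod_cast h2
  have : n = 0 := Int.abs_lt_one_iff.1 this
  simp [this]

lemma lift_Ico (x : Circle1) (a : ℝ) : ∃ t, a ≤ t ∧ t < a + 1 ∧ cc t = x := by
  have : x ∈ cc '' Ico a (a + 1) := by
    have := AddCircle.coe_image_Ico_eq (1 : ℝ) a
    rw [show cc '' Ico a (a+1) = univ from this]; trivial
  obtain ⟨t, ht, rfl⟩ := this
  exact ⟨t, ht.1, ht.2, rfl⟩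

lemma lift_Ioo (x : Circle1) (a : ℝ) (h : x ≠ cc a) : ∃ t, a < t ∧ t < a + 1 ∧ cc t = x := by
  obtain ⟨t, h1, h2, rfl⟩ := lift_Ico x a
  refine ⟨t, lt_of_le_of_ne h1 ?_, h2, rfl⟩
  rintro rfl; exact h rfl

lemma sep {K : Set Circle1} (hK : IsPreconnected K) {a b c e : ℝ} (hab : a < b) (hbc : b < c)
    (hce : c < e) (hea : e < a + 1) (hb : cc b ∈ K) (he : cc e ∈ K) : cc a ∈ K ∨ cc c ∈ K := by
  by_contra hcon
  push Not at hcon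
  have hU := cc_open _ (isOpen_Ioo (a := a) (b := c))
  have hV := cc_open _ (isOpen_Ioo (a := c) (b := a + 1))
  have hcov : K ⊆ cc '' Ioo a c ∪ cc '' Ioo c (a + 1) := by
    intro x hx
    obtain ⟨t, h1, h2, rfl⟩ := lift_Ioo x a (by rintro rfl; exact hcon.1 hx)
    rcases lt_trichotomy t c with h | h | h
    · exact Or.inl ⟨t, ⟨h1, h⟩, rfl⟩
    · exact absurd (h ▸ hx) hcon.2
    · exact Or.inr ⟨t, ⟨h, h2⟩, rfl⟩
  obtain ⟨x, hx, ⟨t, ht, rfl⟩, ⟨t', ht', h⟩⟩ := hK _ _ hU hV hcov ⟨_, hb, b, ⟨hab, hbc⟩, rfl⟩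
    ⟨_, he, e, ⟨hce, hea⟩, rfl⟩
  have := cc_inj h (by rw [abs_lt]; constructor <;> linarith [ht.1, ht.2, ht'.1, ht'.2])
  linarith [ht.2, ht'.1]

lemma conn {F : Set Circle1} {u u' : ℝ} (h : u ≤ u') (hF : ∀ t, u ≤ t → t ≤ u' → cc t ∈ F) :
    cc u' ∈ connectedComponentIn F (cc u) := by
  have h1 : IsPreconnected (cc '' Icc u u') := isPreconnected_Icc.image _ cc_cont.continuousOn
  exact h1.subset_connectedComponentIn ⟨u, ⟨le_rfl, h⟩, rfl⟩
    (by rintro _ ⟨t, ht, rfl⟩; exact hF t ht.1 ht.2) ⟨u', ⟨h, le_rfl⟩, rfl⟩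

lemma comp_symm {F : Set Circle1} {x y : Circle1} (h : y ∈ connectedComponentIn F x) :
    x ∈ connectedComponentIn F y := by
  have hx : x ∈ F := connectedComponentIn_nonempty_iff.1 ⟨_, h⟩
  rw [← connectedComponentIn_eq h]; exact mem_connectedComponentIn hx

lemma comp_trans {F : Set Circle1} {x y z : Circle1} (h : y ∈ connectedComponentIn F x)
    (h' : z ∈ connectedComponentIn F y) : z ∈ connectedComponentIn F x := by
  rw [connectedComponentIn_eq h]; exact h'

/-- separated points have points of `B` in both arcs -/
lemma comp_not {B : Set Circle1} {u u' : ℝ} (h : u ≤ u') (h1 : u' ≤ u + 1)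
    (hu : cc u ∉ B) (hu' : cc u' ∉ B) (hn : cc u' ∉ connectedComponentIn Bᶜ (cc u)) :
    (∃ b, u < b ∧ b < u' ∧ cc b ∈ B) ∧ (∃ b, u' < b ∧ b < u + 1 ∧ cc b ∈ B) := by
  constructor
  · by_contra hc
    push Not at hc
    refine hn (conn h fun t h2 h3 => ?_)
    rcases h2.eq_or_lt with rfl | h2
    · exact hu
    rcases h3.eq_or_lt with rfl | h3
    · exact hu'
    exact hc t h2 h3
  · by_contra hc
    push Not at hc
    refine hn (comp_symm ?_)
    rw [← cc_add_one u]
    refine conn h1 fun t h2 h3 => ?_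
    rcases h2.eq_or_lt with rfl | h2
    · exact hu'
    rcases h3.eq_or_lt with rfl | h3
    · rw [cc_add_one]; exact hu
    exact hc t h2 h3

lemma comp_sep {B : Set Circle1} {a b c e : ℝ} (hab : a < b) (hbc : b < c)
    (hce : c < e) (hea : e < a + 1) (ha : cc a ∈ B) (hc : cc c ∈ B) :
    cc e ∉ connectedComponentIn Bᶜ (cc b) := by
  intro h
  have hb : cc b ∈ Bᶜ := connectedComponentIn_nonempty_iff.1 ⟨_, h⟩
  rcases sep isPreconnected_connectedComponentIn hab hbc hce hea (mem_connectedComponentIn hb) h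
    with h | h
  · exact connectedComponentIn_subset _ _ h ha
  · exact connectedComponentIn_subset _ _ h hc

/-! rationals -/
lemma ratC_iff {x : Circle1} : x ∈ ratC ↔ IsOfFinAddOrder x := by
  induction x using QuotientAddGroup.induction_on with
  | H z =>
    have := AddCircle.isOfFinAddOrder_iff_exists_rat_eq_div (p := (1:ℝ)) (a := z)
    refine Iff.trans ?_ this.symm
    constructor
    · rintro ⟨q, hq⟩
      obtain ⟨n, hn⟩ := cc_eq_iff.1 (show cc z = cc q from hq)
      exact ⟨q - n, by push_cast; simp; linarith⟩
    · rintro ⟨q, hq⟩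
      exact ⟨q, by rw [hq]; simp⟩

lemma ratC_countable : {t : ℝ | cc t ∈ ratC}.Countable := by
  refine (countable_range (fun q : ℚ => (q : ℝ))).mono ?_
  rintro t ⟨q, hq⟩
  obtain ⟨n, hn⟩ := cc_eq_iff.1 (show cc t = cc q from hq)
  exact ⟨q - n, by push_cast; linarith⟩

lemma ratC_nsmul {n : ℕ} (hn : 0 < n) {x : Circle1} : n • x ∈ ratC ↔ x ∈ ratC := by
  rw [ratC_iff, ratC_iff]
  constructor
  · intro h; exact (isOfFinAddOrder_nsmul.1 h).resolve_right (by omega)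
  · intro h; exact h.nsmul

lemma md_ratC {d : ℕ} (hd : 2 ≤ d) {x : Circle1} : md d x ∈ ratC ↔ x ∈ ratC :=
  ratC_nsmul (by omega)

lemma md_iter (d n : ℕ) (x : Circle1) : (md d)^[n] x = d ^ n • x := by
  induction n generalizing x with
  | zero => simp
  | succ n ih => rw [iterate_succ_apply, ih, md, ← mul_nsmul', pow_succ]

lemma md_iter_ratC {d : ℕ} (hd : 2 ≤ d) (n : ℕ) {x : Circle1} : (md d)^[n] x ∈ ratC ↔ x ∈ ratC := by
  rw [md_iter]; exact ratC_nsmul (by positivity)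

lemma md_iter_inj {d : ℕ} (hd : 2 ≤ d) {x : Circle1} (hx : x ∉ ratC) {m n : ℕ}
    (h : (md d)^[m] x = (md d)^[n] x) : m = n := by
  wlog hmn : m < n generalizing m n
  · by_contra hne
    exact hne (this h.symm (by omega)).symm
  exfalso
  rw [md_iter, md_iter] at h
  apply hx
  rw [ratC_iff, isOfFinAddOrder_iff_nsmul_eq_zero]
  refine ⟨d ^ n - d ^ m, ?_, ?_⟩
  · have := Nat.pow_lt_pow_right (a := d) (by omega) hmn
    omega
  · have : d ^ m ≤ d ^ n := Nat.pow_le_pow_right (by omega) hmn.le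
    rw [sub_nsmul _ this, ← h]; simp

lemma fin_mult {x : Circle1} (hx : x ∈ ratC) : (range fun n : ℕ => n • x).Finite := by
  have h := ratC_iff.1 hx
  have hpos := h.addOrderOf_pos
  refine ((Set.finite_Iio (addOrderOf x)).image (fun n : ℕ => n • x)).subset ?_
  rintro _ ⟨n, rfl⟩
  exact ⟨n % addOrderOf x, Nat.mod_lt _ hpos, by simp [mod_addOrderOf_nsmul]⟩

lemma md_cc (d : ℕ) (t : ℝ) : md d (cc t) = cc (d * t) := by
  unfold md cc; rw [← AddCircle.coe_nsmul]; simp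

lemma md_cont (d : ℕ) : Continuous (md d) := continuous_const_smul d

lemma md_iter_cont (d n : ℕ) : Continuous ((md d)^[n]) := (md_cont d).iterate n

lemma closure_iff {r : Circle1 → Circle1 → Prop} {s t : ℝ} :
    (cc s, cc t) ∈ closure {p : Circle1 × Circle1 | r p.1 p.2} ↔
      ∀ ε > 0, ∃ a b, |a - s| < ε ∧ |b - t| < ε ∧ r (cc a) (cc b) := by
  constructor
  · intro h ε hε
    have h1 : (cc '' Metric.ball s ε) ×ˢ (cc '' Metric.ball t ε) ∈ 𝓝 (cc s, cc t) :=
      prod_mem_nhds (cc_open.image_mem_nhds (Metric.ball_mem_nhds s hε))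
        (cc_open.image_mem_nhds (Metric.ball_mem_nhds t hε))
    obtain ⟨⟨x, y⟩, ⟨⟨a, ha, rfl⟩, ⟨b, hb, rfl⟩⟩, hr⟩ := mem_closure_iff_nhds.1 h _ h1
    exact ⟨a, b, by simpa [Real.dist_eq] using ha, by simpa [Real.dist_eq] using hb, hr⟩
  · intro h
    rw [mem_closure_iff_nhds]
    intro U hU
    have hc : Continuous (fun p : ℝ × ℝ => (cc p.1, cc p.2)) :=
      (cc_cont.comp continuous_fst).prodMk (cc_cont.comp continuous_snd)
    have := hc.continuousAt (x := (s, t)) hU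
    obtain ⟨ε, hε, hb⟩ := Metric.mem_nhds_iff.1 this
    obtain ⟨a, b, ha, hb', hr⟩ := h ε hε
    refine ⟨(cc a, cc b), hb (?_ : (a, b) ∈ _), hr⟩
    simp [Prod.dist_eq, Real.dist_eq, ha, hb']

lemma closure_set_iff {w : Set Circle1} {s : ℝ} :
    cc s ∈ closure w ↔ ∀ ε > 0, ∃ a, |a - s| < ε ∧ cc a ∈ w := by
  constructor
  · intro h ε hε
    obtain ⟨_, ⟨a, ha, rfl⟩, hr⟩ := mem_closure_iff_nhds.1 h _
      (cc_open.image_mem_nhds (Metric.ball_mem_nhds s hε))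
    exact ⟨a, by simpa [Real.dist_eq] using ha, hr⟩
  · intro h
    rw [mem_closure_iff_nhds]
    intro U hU
    obtain ⟨ε, hε, hb⟩ := Metric.mem_nhds_iff.1 (cc_cont.continuousAt (x := s) hU)
    obtain ⟨a, ha, hr⟩ := h ε hε
    exact ⟨cc a, hb (by simpa [Real.dist_eq] using ha), hr⟩

lemma nhds_free {B : Set Circle1} (hB : B.Finite) {t : ℝ} (ht : cc t ∉ B) :
    ∃ ε > 0, ∀ s, |s - t| < ε → cc s ∉ B := by
  have : Bᶜ ∈ 𝓝 (cc t) := hB.isClosed.isOpen_compl.mem_nhds ht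
  obtain ⟨ε, hε, hb⟩ := Metric.mem_nhds_iff.1 (cc_cont.continuousAt this)
  exact ⟨ε, hε, fun s hs => hb (by simpa [Real.dist_eq] using hs)⟩

lemma right_free {B : Set Circle1} (hB : B.Finite) (t : ℝ) :
    ∃ ε > 0, ∀ s, t < s → s < t + ε → cc s ∉ B := by
  obtain ⟨ε, hε, h⟩ := nhds_free (hB.subset (sdiff_subset (t := {cc t}))) (t := t) (by simp)
  refine ⟨min ε 1, by positivity, fun s h1 h2 h3 => ?_⟩
  have h4 := min_le_left ε 1
  have h5 := min_le_right ε 1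
  have habs : |s - t| < min ε 1 := by rw [abs_lt]; constructor <;> linarith
  refine h s (by linarith) ⟨h3, fun h6 => ?_⟩
  have := cc_inj h6 (by linarith)
  linarith

abbrev clR (r : Circle1 → Circle1 → Prop) (x y : Circle1) : Prop :=
  (x, y) ∈ closure {p : Circle1 × Circle1 | r p.1 p.2}

lemma clR_symm (L : RatLam) {x y : Circle1} (h : clR L.rel x y) : clR L.rel y x := by
  have : Continuous (Prod.swap : Circle1 × Circle1 → Circle1 × Circle1) := continuous_swap
  have h2 := map_mem_closure this h (t := {p : Circle1 × Circle1 | L.rel p.1 p.2})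
    (fun p hp => L.symm _ _ hp)
  exact h2

lemma clR_md {d : ℕ} {r : Circle1 → Circle1 → Prop} (hinv : ∀ x y, r x y → r (md d x) (md d y))
    {x y : Circle1} (h : clR r x y) : clR r (md d x) (md d y) := by
  have : Continuous (Prod.map (md d) (md d)) := (md_cont d).prodMap (md_cont d)
  have h2 := map_mem_closure this h (t := {p : Circle1 × Circle1 | r p.1 p.2})
    (fun p hp => hinv _ _ hp)
  exact h2

lemma clR_of_rel {r : Circle1 → Circle1 → Prop} {x y : Circle1} (h : r x y) : clR r x y :=
  subset_closure h

lemma inv_rel {d : ℕ} (L : InvRatLam d) (x y : Circle1) (h : L.rel x y) :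
    L.rel (md d x) (md d y) := by
  have h1 := (L.invariant x (L.rel_rat _ _ h).1).1
  have : md d y ∈ md d '' relClass L.rel x := ⟨y, h, rfl⟩
  rw [h1] at this; exact this

lemma relClass_eq (L : RatLam) {x y : Circle1} (h : L.rel x y) :
    relClass L.rel x = relClass L.rel y := by
  ext z; exact ⟨fun hz => L.trans _ _ _ (L.symm _ _ h) hz, fun hz => L.trans _ _ _ h hz⟩

/-- crossing pairs are in the same class -/
lemma cross (L : RatLam) {a b c e : ℝ} (hab : a < b) (hbc : b < c)
    (hce : c < e) (hea : e < a + 1) (h1 : L.rel (cc a) (cc c)) (h2 : L.rel (cc b) (cc e)) :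
    L.rel (cc a) (cc b) := by
  by_contra hn
  obtain ⟨x, hx, hsub⟩ := L.unlinkedClass _ _ hn
  have hb : cc b ∈ connectedComponentIn (relClass L.rel (cc a))ᶜ x :=
    hsub (L.refl _ (L.rel_rat _ _ h2).1)
  have he : cc e ∈ connectedComponentIn (relClass L.rel (cc a))ᶜ x := hsub h2
  exact comp_sep hab hbc hce hea (L.refl _ (L.rel_rat _ _ h1).1) h1
    (comp_trans (comp_symm hb) he)

lemma three_sorted {S : Set ℝ} (hS : S.Infinite) : ∃ a ∈ S, ∃ b ∈ S, ∃ c ∈ S, a < b ∧ b < c := by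
  obtain ⟨t, ht, hc⟩ := hS.exists_subset_card_eq 3
  let f := t.orderEmbOfFin hc
  exact ⟨f 0, ht (t.orderEmbOfFin_mem hc 0), f 1, ht (t.orderEmbOfFin_mem hc 1), f 2,
    ht (t.orderEmbOfFin_mem hc 2), f.strictMono (by decide), f.strictMono (by decide)⟩

lemma three_close {S : Set ℝ} (hS : S.Infinite) (hb : S ⊆ Icc 0 1) {ε : ℝ} (hε : 0 < ε) :
    ∃ a ∈ S, ∃ b ∈ S, ∃ c ∈ S, a < b ∧ b < c ∧ c - a < ε := by
  have : ∃ k : ℤ, (S ∩ {x | ⌊x / ε⌋ = k}).Infinite := by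
    by_contra hcon
    push Not at hcon
    apply hS
    have hfin : (⋃ k ∈ Icc (0 : ℤ) ⌊1 / ε⌋, S ∩ {x | ⌊x / ε⌋ = k}).Finite :=
      (finite_Icc _ _).biUnion fun k _ => by
        have := hcon k
        simpa using this
    refine hfin.subset fun x hx => ?_
    have := hb hx
    simp only [mem_iUnion]
    refine ⟨⌊x / ε⌋, ⟨Int.floor_nonneg.2 (div_nonneg this.1 hε.le), Int.floor_le_floor ?_⟩, hx, rfl⟩
    gcongr; exact this.2
  obtain ⟨k, hk⟩ := this
  obtain ⟨a, ha, b, hb, c, hc, h1, h2⟩ := three_sorted hk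
  refine ⟨a, ha.1, b, hb.1, c, hc.1, h1, h2, ?_⟩
  have h3 := Int.floor_le (a / ε)
  have h4 := Int.lt_floor_add_one (c / ε)
  rw [show ⌊a / ε⌋ = k from ha.2] at h3
  rw [show ⌊c / ε⌋ = k from hc.2] at h4
  rw [le_div_iff₀ hε] at h3
  rw [div_lt_iff₀ hε] at h4
  nlinarith

lemma K0_aux (L : RatLam) {q z : ℝ} (hz : cc z ∉ ratC) (x : Circle1) (η : ℝ) (hη : 0 < η)
    (h : clR L.rel (cc q) (cc z)) :
    ∃ a b, |a - q| < η ∧ |b - z| < η ∧ L.rel (cc a) (cc b) ∧ ¬ L.rel x (cc b) := by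
  obtain ⟨ε, hε, hf⟩ := nhds_free (L.finiteClass x) (t := z) (fun h => hz (L.rel_rat _ _ h).2)
  obtain ⟨a, b, h1, h2, h3⟩ := closure_iff.1 h (min ε η) (by positivity)
  exact ⟨a, b, h1.trans_le (min_le_right _ _), h2.trans_le (min_le_right _ _), h3,
    hf b (h2.trans_le (min_le_left _ _))⟩

lemma K0 (L : RatLam) {q z1 z2 z3 : ℝ} (hq : cc q ∈ ratC) (h1 : cc z1 ∉ ratC) (h2 : cc z2 ∉ ratC)
    (h3 : cc z3 ∉ ratC) (hq1 : q < z1) (h12 : z1 < z2) (h23 : z2 < z3) (h3q : z3 < q + 1)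
    (c1 : clR L.rel (cc q) (cc z1)) (c2 : clR L.rel (cc q) (cc z2)) (c3 : clR L.rel (cc q) (cc z3)) :
    False := by
  obtain ⟨η, hη, e1, e2, e3, e4⟩ : ∃ η > 0, 2 * η < z1 - q ∧ 2 * η < z2 - z1 ∧ 2 * η < z3 - z2 ∧
      2 * η < q + 1 - z3 := by
    refine ⟨min (min (z1 - q) (z2 - z1)) (min (z3 - z2) (q + 1 - z3)) / 4, ?_, ?_⟩
    · have : 0 < z1 - q := by linarith
      have : 0 < z2 - z1 := by linarith
      have : 0 < z3 - z2 := by linarith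
      have : 0 < q + 1 - z3 := by linarith
      positivity
    · set m := min (min (z1 - q) (z2 - z1)) (min (z3 - z2) (q + 1 - z3))
      have i1 : m ≤ z1 - q := (min_le_left _ _).trans (min_le_left _ _)
      have i2 : m ≤ z2 - z1 := (min_le_left _ _).trans (min_le_right _ _)
      have i3 : m ≤ z3 - z2 := (min_le_right _ _).trans (min_le_left _ _)
      have i4 : m ≤ q + 1 - z3 := (min_le_right _ _).trans (min_le_right _ _)
      refine ⟨?_, ?_, ?_, ?_⟩ <;> linarith
  obtain ⟨a, b, ha, hb, hab, hn⟩ := K0_aux L h2 (cc q) η hη c2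
  have haq : a ≠ q := by rintro rfl; exact hn hab
  rw [abs_lt] at ha hb
  rcases lt_or_gt_of_ne haq with hlt | hgt
  · obtain ⟨a', b', ha', hb', hab', hn'⟩ := K0_aux L h3 (cc a) (min η (q - a))
      (lt_min hη (by linarith)) c3
    have ha'' := ha'.trans_le (min_le_right _ _)
    have ha' := ha'.trans_le (min_le_left _ _)
    have hb' := hb'.trans_le (min_le_left _ _)
    rw [abs_lt] at ha' hb' ha''
    have := cross L (a := a) (b := a') (c := b) (e := b') (by linarith) (by linarith) (by linarith)
      (by linarith) hab hab'
    exact hn' (L.trans _ _ _ this hab')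
  · obtain ⟨a', b', ha', hb', hab', hn'⟩ := K0_aux L h1 (cc a) (min η (a - q))
      (lt_min hη (by linarith)) c1
    have ha'' := ha'.trans_le (min_le_right _ _)
    have ha' := ha'.trans_le (min_le_left _ _)
    have hb' := hb'.trans_le (min_le_left _ _)
    rw [abs_lt] at ha' hb' ha''
    have := cross L (a := a') (b := a) (c := b') (e := b) (by linarith) (by linarith) (by linarith)
      (by linarith) hab' hab
    exact hn' (L.trans _ _ _ (L.symm _ _ this) hab')

lemma K1 (L : RatLam) {q : Circle1} (hq : q ∈ ratC) : {z | z ∉ ratC ∧ clR L.rel q z}.Finite := by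
  by_contra hinf
  have hinf : {z | z ∉ ratC ∧ clR L.rel q z}.Infinite := hinf
  obtain ⟨q, -, -, rfl⟩ := lift_Ico q 0
  have : {t : ℝ | (q < t ∧ t < q + 1) ∧ cc t ∉ ratC ∧ clR L.rel (cc q) (cc t)}.Infinite := by
    refine Infinite.of_image cc (hinf.mono ?_)
    rintro z ⟨hz, hc⟩
    obtain ⟨t, h1, h2, rfl⟩ := lift_Ioo z q (by rintro rfl; exact hz hq)
    exact ⟨t, ⟨⟨h1, h2⟩, hz, hc⟩, rfl⟩
  obtain ⟨a, ha, b, hb, c, hc, h1, h2⟩ := three_sorted this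
  exact K0 L hq ha.2.1 hb.2.1 hc.2.1 ha.1.1 h1 h2 hc.1.2 ha.2.2 hb.2.2 hc.2.2

lemma iter_inv {d : ℕ} {r : Circle1 → Circle1 → Prop}
    (hinv : ∀ x y, r x y → r (md d x) (md d y)) (n : ℕ) {x y : Circle1} (h : r x y) :
    r ((md d)^[n] x) ((md d)^[n] y) := by
  induction n generalizing x y with
  | zero => exact h
  | succ n ih => rw [iterate_succ_apply, iterate_succ_apply]; exact ih (hinv _ _ h)

/-- Kiwi's lemma -/
lemma K {d : ℕ} (hd : 2 ≤ d) (L : RatLam) (hinv : ∀ x y, L.rel x y → L.rel (md d x) (md d y))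
    {q z : Circle1} (hq : q ∈ ratC) (h : clR L.rel q z) : z ∈ ratC := by
  by_contra hz
  obtain ⟨y, hy⟩ : ∃ y, {n : ℕ | (md d)^[n] q = y}.Infinite := by
    by_contra hcon
    push Not at hcon
    have hf := fin_mult hq
    have : (⋃ y ∈ range (fun n : ℕ => n • q), {n : ℕ | (md d)^[n] q = y}).Finite :=
      hf.biUnion fun y _ => by simpa using hcon y
    refine Set.infinite_univ (α := ℕ) (this.subset fun n _ => ?_)
    simp only [mem_iUnion]
    exact ⟨_, ⟨d ^ n, rfl⟩, (md_iter d n q)⟩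
  have hyr : y ∈ ratC := by
    obtain ⟨n, hn⟩ := hy.nonempty
    rw [← show (md d)^[n] q = y from hn, md_iter_ratC hd]; exact hq
  refine (hy.image (f := fun n => (md d)^[n] z) ?_) ((K1 L hyr).subset ?_)
  · intro m _ n _ hmn; exact md_iter_inj hd hz hmn
  · rintro _ ⟨n, hn, rfl⟩
    refine ⟨by rwa [md_iter_ratC hd], ?_⟩
    have h2 := iter_inv (r := clR L.rel) (fun x y h => clR_md hinv h) n h
    rw [show (md d)^[n] q = y from hn] at h2
    exact h2

lemma K' {d : ℕ} (hd : 2 ≤ d) (L : RatLam) (hinv : ∀ x y, L.rel x y → L.rel (md d x) (md d y))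
    {q z : Circle1} (hq : q ∈ ratC) (h : clR L.rel q z) : L.rel q z :=
  L.closed' _ hq _ (K hd L hinv hq h) h

lemma realExt_of_rel {r : Circle1 → Circle1 → Prop} {x y : Circle1} (h : r x y) : realExt r x y :=
  Relation.EqvGen.rel _ _ (clR_of_rel h)

lemma realExt_rat {d : ℕ} (hd : 2 ≤ d) (L : RatLam)
    (hinv : ∀ x y, L.rel x y → L.rel (md d x) (md d y)) {x y : Circle1} (h : realExt L.rel x y) :
    (x ∈ ratC → L.rel x y) ∧ (y ∈ ratC → L.rel x y) := by
  induction h with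
  | rel x y h =>
    exact ⟨fun hx => K' hd L hinv hx h, fun hy => L.symm _ _ (K' hd L hinv hy (clR_symm L h))⟩
  | refl x => exact ⟨L.refl x, L.refl x⟩
  | symm x y _ ih => exact ⟨fun h => L.symm _ _ (ih.2 h), fun h => L.symm _ _ (ih.1 h)⟩
  | trans x y z _ _ ih1 ih2 =>
    refine ⟨fun h => ?_, fun h => ?_⟩
    · have := ih1.1 h
      exact L.trans _ _ _ this (ih2.1 (L.rel_rat _ _ this).2)
    · have := ih2.2 h
      exact L.trans _ _ _ (ih1.2 (L.rel_rat _ _ this).1) this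

lemma realExt_md {d : ℕ} {r : Circle1 → Circle1 → Prop}
    (hinv : ∀ x y, r x y → r (md d x) (md d y)) {x y : Circle1} (h : realExt r x y) :
    realExt r (md d x) (md d y) := by
  induction h with
  | rel x y h => exact Relation.EqvGen.rel _ _ (clR_md hinv h)
  | refl x => exact Relation.EqvGen.refl _
  | symm x y _ ih => exact ih.symm
  | trans x y z _ _ ih1 ih2 => exact ih1.trans _ _ _ ih2

/-! unlinked relation -/
lemma unl_refl {r : Circle1 → Circle1 → Prop} {x : Circle1} (h : x ∉ ratC) : UnlRel r x x :=
  ⟨h, h, Or.inl rfl⟩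

lemma unl_comp (L : RatLam) {x y z : Circle1} (h : UnlRel L.rel x y) (hz : z ∈ ratC) :
    y ∈ connectedComponentIn (relClass L.rel z)ᶜ x := by
  rcases h.2.2 with rfl | h'
  · exact mem_connectedComponentIn fun h2 => h.1 (L.rel_rat _ _ h2).2
  · exact h' z hz

lemma unl_symm (L : RatLam) {x y : Circle1} (h : UnlRel L.rel x y) : UnlRel L.rel y x :=
  ⟨h.2.1, h.1, Or.inr fun _ hz => comp_symm (unl_comp L h hz)⟩

lemma unl_trans (L : RatLam) {x y z : Circle1} (h : UnlRel L.rel x y) (h' : UnlRel L.rel y z) :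
    UnlRel L.rel x z :=
  ⟨h.1, h'.2.1, Or.inr fun _ hz => comp_trans (unl_comp L h hz) (unl_comp L h' hz)⟩

lemma cls_unl (L : RatLam) {w : Set Circle1} (hw : IsUnlClass L.rel w) {x y : Circle1} (hx : x ∈ w) :
    y ∈ w ↔ UnlRel L.rel x y := by
  obtain ⟨θ, hθ, rfl⟩ := hw
  exact ⟨fun h => unl_trans L (unl_symm L hx) h, fun h => unl_trans L hx h⟩

lemma cls_irr (L : RatLam) {w : Set Circle1} (hw : IsUnlClass L.rel w) {x : Circle1} (hx : x ∈ w) :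
    x ∉ ratC := by
  obtain ⟨θ, hθ, rfl⟩ := hw
  exact hx.2.1

lemma cls_ne (L : RatLam) {w : Set Circle1} (hw : IsUnlClass L.rel w) : w.Nonempty := by
  obtain ⟨θ, hθ, rfl⟩ := hw
  exact ⟨θ, unl_refl hθ⟩

lemma cls_eq (L : RatLam) {w w' : Set Circle1} (hw : IsUnlClass L.rel w) (hw' : IsUnlClass L.rel w')
    {x y : Circle1} (hx : x ∈ w) (hy : y ∈ w') (h : UnlRel L.rel x y) : w = w' := by
  ext z
  rw [cls_unl L hw hx, cls_unl L hw' hy]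
  exact ⟨fun h' => unl_trans L (unl_symm L h) h', fun h' => unl_trans L h h'⟩

/-- crossing irrational pairs -/
lemma unl_cross (L : RatLam) {a b c e : ℝ} (hab : a < b) (hbc : b < c)
    (hce : c < e) (hea : e < a + 1) (h1 : UnlRel L.rel (cc a) (cc c)) (h2 : UnlRel L.rel (cc b) (cc e)) :
    UnlRel L.rel (cc a) (cc b) := by
  refine ⟨h1.1, h2.1, Or.inr fun z hz => ?_⟩
  by_contra hn
  have nb : ∀ {x}, x ∉ ratC → x ∉ relClass L.rel z := fun hx h => hx (L.rel_rat _ _ h).2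
  obtain ⟨⟨p, p1, p2, p3⟩, ⟨q, q1, q2, q3⟩⟩ := comp_not hab.le (by linarith) (nb h1.1) (nb h2.1) hn
  have k1 := unl_comp L h1 hz
  have k2 := unl_comp L h2 hz
  rcases lt_trichotomy q c with h | h | h
  · refine comp_sep (a := p) (b := b) (c := q) (e := e) p2 q1 (by linarith) (by linarith) p3 q3 k2
  · subst h; exact nb h1.2.1 q3
  · refine comp_sep (a := q) (b := a + 1) (c := p + 1) (e := c + 1) q2 (by linarith) (by linarith)
      (by linarith) q3 (by rwa [cc_add_one]) (by rwa [cc_add_one, cc_add_one])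

/-- a closure leaf has an unlinked class on one side only -/
lemma one_side (L : RatLam) {z u c u' : ℝ} (h1 : z < u) (h2 : u < c) (h3 : c < u') (h4 : u' < z + 1)
    (hc : clR L.rel (cc z) (cc c)) : ¬ UnlRel L.rel (cc u) (cc u') := by
  intro h
  obtain ⟨a, b, ha, hb, hab⟩ := closure_iff.1 hc
    (min (min (u - z) (c - u)) (min (u' - c) (z + 1 - u'))) (by
      have : 0 < u - z := by linarith
      have : 0 < c - u := by linarith
      have : 0 < u' - c := by linarith
      have : 0 < z + 1 - u' := by linarith
      positivity)
  simp only [lt_min_iff, abs_lt] at ha hb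
  exact comp_sep (a := a) (b := u) (c := b) (e := u') (by linarith) (by linarith) (by linarith)
    (by linarith) (L.refl _ (L.rel_rat _ _ hab).1) hab (unl_comp L h (L.rel_rat _ _ hab).1)

lemma clR_unl (L : RatLam) {x y : Circle1} (hx : x ∉ ratC) (hy : y ∉ ratC) (h : clR L.rel x y) :
    UnlRel L.rel x y := by
  refine ⟨hx, hy, Or.inr fun z hz => ?_⟩
  by_contra hn
  have nb : ∀ {x}, x ∉ ratC → x ∉ relClass L.rel z := fun hx h => hx (L.rel_rat _ _ h).2
  obtain ⟨x, -, -, rfl⟩ := lift_Ico x 0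
  obtain ⟨y, y1, y2, rfl⟩ := lift_Ico y x
  obtain ⟨⟨p, p1, p2, p3⟩, ⟨q, q1, q2, q3⟩⟩ := comp_not y1 (by linarith) (nb hx) (nb hy) hn
  obtain ⟨a, b, ha, hb, hab, hno⟩ := K0_aux L hy z (min (min (p - x) (y - p)) (min (q - y) (x + 1 - q)))
    (by
      have : 0 < p - x := by linarith
      have : 0 < y - p := by linarith
      have : 0 < q - y := by linarith
      have : 0 < x + 1 - q := by linarith
      positivity) h
  simp only [lt_min_iff, abs_lt] at ha hb
  have := cross L (a := a) (b := p) (c := b) (e := q) (by linarith) (by linarith) (by linarith)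
    (by linarith) hab (L.trans _ _ _ (L.symm _ _ p3) q3)
  exact hno (L.trans _ _ _ p3 (L.trans _ _ _ (L.symm _ _ this) hab))

lemma realExt_unl {d : ℕ} (hd : 2 ≤ d) (L : RatLam)
    (hinv : ∀ x y, L.rel x y → L.rel (md d x) (md d y)) {x y : Circle1} (h : realExt L.rel x y)
    (hx : x ∉ ratC) : UnlRel L.rel x y := by
  have key : ∀ x y, realExt L.rel x y → (x ∈ ratC ↔ y ∈ ratC) := by
    intro x y h
    have := realExt_rat hd L hinv h
    exact ⟨fun hx => (L.rel_rat _ _ (this.1 hx)).2, fun hx => (L.rel_rat _ _ (this.2 hx)).1⟩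
  induction h with
  | rel x y h =>
    exact clR_unl L hx (fun hy => hx ((key _ _ (Relation.EqvGen.rel _ _ h)).2 hy)) h
  | refl x => exact unl_refl hx
  | symm x y h ih => exact unl_symm L (ih fun h' => hx ((key _ _ h).1 h'))
  | trans x y z h1 _ ih1 ih2 =>
    exact unl_trans L (ih1 hx) (ih2 fun hy => hx ((key _ _ h1).2 hy))

/-- leaf over `u` inside `[s,t]` -/
def Cov (L : RatLam) (s t u : ℝ) : Prop :=
  ∃ c c', s ≤ c ∧ c < u ∧ u < c' ∧ c' ≤ t ∧ L.rel (cc c) (cc c')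

def Cov2 (L : RatLam) (s t u v : ℝ) : Prop :=
  ∃ c c', s ≤ c ∧ c < u ∧ u < c' ∧ c < v ∧ v < c' ∧ c' ≤ t ∧ L.rel (cc c) (cc c')

lemma cov_open (L : RatLam) (s t : ℝ) : IsOpen {u | Cov L s t u} := by
  rw [Metric.isOpen_iff]
  rintro u ⟨c, c', h1, h2, h3, h4, h5⟩
  refine ⟨min (u - c) (c' - u), by have : 0 < u - c := by linarith
                                   have : 0 < c' - u := by linarith
                                   positivity, fun v hv => ?_⟩
  rw [Metric.mem_ball, Real.dist_eq, lt_min_iff, abs_lt, abs_lt] at hv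
  exact ⟨c, c', h1, by linarith, by linarith, h4, h5⟩

lemma cov2_trans (L : RatLam) {s t : ℝ} (hst : t < s + 1) {u v x : ℝ} (h : Cov2 L s t u v)
    (h' : Cov2 L s t v x) : Cov2 L s t u x := by
  obtain ⟨c, c', h1, h2, h3, h4, h5, h6, h7⟩ := h
  obtain ⟨e, e', k1, k2, k3, k4, k5, k6, k7⟩ := h'
  rcases le_or_gt c e with hce | hce
  · rcases le_or_gt e' c' with he | he
    · exact ⟨c, c', h1, h2, h3, by linarith, by linarith, h6, h7⟩
    · rcases hce.eq_or_lt with rfl | hce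
      · exact ⟨c, e', h1, h2, by linarith, k4, k5, k6, k7⟩
      · have := cross L hce (by linarith) he (by linarith) h7 k7
        exact ⟨c, e', h1, h2, by linarith, by linarith, k5, k6, L.trans _ _ _ this k7⟩
  · rcases le_or_gt c' e' with he | he
    · exact ⟨e, e', k1, by linarith, by linarith, k4, k5, k6, k7⟩
    · have := cross L hce (by linarith) he (by linarith) k7 h7
      exact ⟨e, c', k1, by linarith, h3, k4, by linarith, h6, L.trans _ _ _ this h7⟩

lemma cov_interval (L : RatLam) {s t : ℝ} (hst : t < s + 1) {a b : ℝ} (hab : a ≤ b)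
    (h : ∀ u, a ≤ u → u ≤ b → Cov L s t u) : Cov2 L s t a b := by
  refine (isPreconnected_Icc (a := a) (b := b)).induction₂ (Cov2 L s t) (fun x hx => ?_) ?_ ?_
    ⟨le_rfl, hab⟩ ⟨hab, le_rfl⟩
  · obtain ⟨c, c', h1, h2, h3, h4, h5⟩ := h x hx.1 hx.2
    refine mem_nhdsWithin_of_mem_nhds ?_
    filter_upwards [Ioo_mem_nhds h2 h3] with y hy
    exact ⟨c, c', h1, h2, h3, hy.1, hy.2, h4, h5⟩
  · intro x y z _ _ _ h1 h2; exact cov2_trans L hst h1 h2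
  · rintro x y _ _ ⟨c, c', h1, h2, h3, h4, h5, h6, h7⟩
    exact ⟨c, c', h1, h4, h5, h2, h3, h6, h7⟩

lemma isolated_of_countable {K : Set ℝ} (hK : IsLocallyClosed K) (hc : K.Countable)
    (hne : K.Nonempty) : ∃ k ∈ K, ∃ ε > 0, ∀ x ∈ K, |x - k| < ε → x = k := by
  haveI := hK.locallyCompactSpace
  haveI : Countable K := hc.to_subtype
  haveI : Nonempty K := hne.to_subtype
  obtain ⟨k, x, hx⟩ := nonempty_interior_of_iUnion_of_closed (X := K) (f := fun k : K => {k})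
    (fun k => isClosed_singleton) (by ext; simp)
  have hxk : x = k := by have := interior_subset hx; simpa using this
  subst hxk
  obtain ⟨ε, hε, hb⟩ := Metric.mem_nhds_iff.1 (mem_interior_iff_mem_nhds.1 hx)
  refine ⟨x, x.2, ε, hε, fun y hy hyx => ?_⟩
  have : (⟨y, hy⟩ : K) ∈ ({x} : Set K) := hb (by simpa [Subtype.dist_eq, Real.dist_eq] using hyx)
  exact congrArg Subtype.val this

/-- limits of leaves: first coordinate in a compact, second tends to `k` -/
lemma leaf_limit {r : Circle1 → Circle1 → Prop} {a b k : ℝ}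
    (h : ∀ ε > 0, ∃ c c', a ≤ c ∧ c ≤ b ∧ |c' - k| < ε ∧ r (cc c) (cc c')) :
    ∃ e, a ≤ e ∧ e ≤ b ∧ clR r (cc e) (cc k) := by
  choose! c c' h1 h2 h3 h4 using fun n : ℕ => h (1 / ((n : ℝ) + 1)) (by positivity)
  obtain ⟨e, he, φ, hφ, hlim⟩ := (isCompact_Icc (a := a) (b := b)).tendsto_subseq
    (x := c) (fun n => ⟨h1 n, h2 n⟩)
  refine ⟨e, he.1, he.2, ?_⟩
  have hc' : Filter.Tendsto c' Filter.atTop (𝓝 k) := by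
    rw [tendsto_iff_dist_tendsto_zero]
    exact squeeze_zero (fun _ => dist_nonneg) (fun n => (h3 n).le) tendsto_one_div_add_atTop_nhds_zero_nat
  have := ((cc_cont.tendsto e).comp hlim).prodMk_nhds
    ((cc_cont.tendsto k).comp (hc'.comp hφ.tendsto_atTop))
  exact mem_closure_of_tendsto this (Filter.Eventually.of_forall fun n => h4 (φ n))

lemma gap_cov {d : ℕ} (L : RatLam)
    {w : Set Circle1} (hw : IsUnlClass L.rel w) {s t : ℝ} (hst1 : t < s + 1)
    (hs : cc s ∈ closure w) (ht : cc t ∈ closure w) (hfree : ∀ u, s < u → u < t → cc u ∉ w)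
    {u : ℝ} (hsu : s < u) (hut : u < t) (hu : cc u ∉ ratC) : Cov L s t u := by
  obtain ⟨θ, hθ⟩ := cls_ne L hw
  have : ¬ UnlRel L.rel θ (cc u) := fun h => hfree u hsu hut ((cls_unl L hw hθ).2 h)
  have : ∃ z ∈ ratC, cc u ∉ connectedComponentIn (relClass L.rel z)ᶜ θ := by
    by_contra hc
    push Not at hc
    exact this ⟨cls_irr L hw hθ, hu, Or.inr hc⟩
  obtain ⟨z, hz, hn⟩ := this
  have nb : ∀ {x}, x ∉ ratC → x ∉ relClass L.rel z := fun hx h => hx (L.rel_rat _ _ h).2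
  have hn' : ∀ l ∈ w, l ∉ connectedComponentIn (relClass L.rel z)ᶜ (cc u) := by
    intro l hl h
    exact hn (comp_trans (unl_comp L ((cls_unl L hw hθ).1 hl) hz) (comp_symm h))
  have A : ∃ c', u < c' ∧ c' ≤ t ∧ L.rel z (cc c') := by
    by_contra hc
    push Not at hc
    obtain ⟨ε, hε, hf⟩ := nhds_free (L.finiteClass z) (t := t) (hc t hut le_rfl)
    obtain ⟨l, h1, h2⟩ := closure_set_iff.1 ht (min ε (min (t - u) (s + 1 - t)))
      (lt_min hε (lt_min (by linarith) (by linarith)))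
    simp only [lt_min_iff] at h1
    have h3 := abs_lt.1 h1.2.1
    have h4 := abs_lt.1 h1.2.2
    have h5 : t ≤ l := by
      by_contra h5
      exact hfree l (by linarith) (by linarith) h2
    refine hn' _ h2 (conn (by linarith) fun x hx hx' => ?_)
    rcases hx.eq_or_lt with rfl | hx
    · exact nb hu
    rcases le_or_gt x t with h6 | h6
    · exact hc x hx h6
    · exact hf x (by rw [abs_lt]; have := abs_lt.1 h1.1; constructor <;> linarith)
  have B : ∃ c, s ≤ c ∧ c < u ∧ L.rel z (cc c) := by
    by_contra hc
    push Not at hc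
    obtain ⟨ε, hε, hf⟩ := nhds_free (L.finiteClass z) (t := s) (hc s le_rfl hsu)
    obtain ⟨l, h1, h2⟩ := closure_set_iff.1 hs (min ε (min (u - s) (s + 1 - t)))
      (lt_min hε (lt_min (by linarith) (by linarith)))
    simp only [lt_min_iff] at h1
    have h3 := abs_lt.1 h1.2.1
    have h4 := abs_lt.1 h1.2.2
    have h5 : l ≤ s := by
      by_contra h5
      exact hfree l (by linarith) (by linarith) h2
    refine hn' _ h2 (comp_symm (conn (by linarith) fun x hx hx' => ?_))
    rcases hx'.eq_or_lt with rfl | hx'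
    · exact nb hu
    rcases le_or_gt s x with h6 | h6
    · exact hc x h6 hx'
    · exact hf x (by rw [abs_lt]; have := abs_lt.1 h1.1; constructor <;> linarith)
  obtain ⟨c', p1, p2, p3⟩ := A
  obtain ⟨c, q1, q2, q3⟩ := B
  exact ⟨c, c', q1, q2, p1, p2, L.trans _ _ _ (L.symm _ _ q3) p3⟩

/-- boundary leaves of unlinked classes -/
lemma gap {d : ℕ} (hd : 2 ≤ d) (L : RatLam)
    (hinv : ∀ x y, L.rel x y → L.rel (md d x) (md d y))
    {w : Set Circle1} (hw : IsUnlClass L.rel w) {s t : ℝ} (hst : s < t) (hst1 : t < s + 1)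
    (hs : cc s ∈ closure w) (ht : cc t ∈ closure w) (hfree : ∀ u, s < u → u < t → cc u ∉ w) :
    clR L.rel (cc s) (cc t) := by
  have hcov : ∀ u, s < u → u < t → cc u ∉ ratC → Cov L s t u := fun u h1 h2 h3 =>
    gap_cov (d := d) L hw hst1 hs ht hfree h1 h2 h3
  have hall : ∀ u, s < u → u < t → Cov L s t u := by
    by_contra hcon
    push Not at hcon
    obtain ⟨u0, a1, a2, a3⟩ := hcon
    obtain ⟨k, ⟨⟨hk1, hk2⟩, hk3⟩, ε, hε, hiso⟩ :=
      isolated_of_countable (K := Ioo s t ∩ {u | Cov L s t u}ᶜ)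
      (isOpen_Ioo.isLocallyClosed.inter (cov_open L s t).isClosed_compl.isLocallyClosed)
      (ratC_countable.mono fun u hu => by
        by_contra h
        exact hu.2 (hcov u hu.1.1 hu.1.2 h)) ⟨u0, ⟨a1, a2⟩, a3⟩
    have hk3 : ¬ Cov L s t k := hk3
    have hkr : cc k ∈ ratC := by
      by_contra h
      exact hk3 (hcov k hk1 hk2 h)
    have hc : ∀ x, s < x → x < t → |x - k| < ε → x ≠ k → Cov L s t x := by
      intro x h1 h2 h3 h4
      by_contra h5
      exact h4 (hiso x ⟨⟨h1, h2⟩, h5⟩ h3)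
    obtain ⟨η, hη, e1, e2, e3⟩ : ∃ η > 0, η < ε ∧ η < k - s ∧ η < t - k := by
      refine ⟨min ε (min (k - s) (t - k)) / 2, ?_, ?_⟩
      · have : 0 < k - s := by linarith
        have : 0 < t - k := by linarith
        positivity
      · have i1 := min_le_left ε (min (k - s) (t - k))
        have i2 := (min_le_right ε (min (k - s) (t - k))).trans (min_le_left _ _)
        have i3 := (min_le_right ε (min (k - s) (t - k))).trans (min_le_right _ _)
        refine ⟨?_, ?_, ?_⟩ <;> linarith
    obtain ⟨e, he1, he2, he3⟩ : ∃ e, s ≤ e ∧ e ≤ k - η ∧ clR L.rel (cc e) (cc k) := by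
      refine leaf_limit fun ζ hζ => ?_
      obtain ⟨ξ, hξ, x1, x2⟩ : ∃ ξ > 0, ξ < η ∧ ξ < ζ := ⟨min η ζ / 2, by positivity,
        by have := min_le_left η ζ; linarith, by have := min_le_right η ζ; linarith⟩
      obtain ⟨c, c', h1, h2, h3, h4, h5, h6, h7⟩ := cov_interval L hst1 (a := k - η) (b := k - ξ)
        (by linarith) (fun u hu hu' => hc u (by linarith) (by linarith)
          (by rw [abs_lt]; constructor <;> linarith) (by linarith))
      refine ⟨c, c', h1, h2.le, ?_, h7⟩
      have : c' ≤ k := by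
        by_contra hck
        exact hk3 ⟨c, c', h1, by linarith, by linarith, h6, h7⟩
      rw [abs_lt]; constructor <;> linarith
    obtain ⟨f, hf1, hf2, hf3⟩ : ∃ f, k + η ≤ f ∧ f ≤ t ∧ clR L.rel (cc f) (cc k) := by
      refine leaf_limit fun ζ hζ => ?_
      obtain ⟨ξ, hξ, x1, x2⟩ : ∃ ξ > 0, ξ < η ∧ ξ < ζ := ⟨min η ζ / 2, by positivity,
        by have := min_le_left η ζ; linarith, by have := min_le_right η ζ; linarith⟩
      obtain ⟨c, c', h1, h2, h3, h4, h5, h6, h7⟩ := cov_interval L hst1 (a := k + ξ) (b := k + η)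
        (by linarith) (fun u hu hu' => hc u (by linarith) (by linarith)
          (by rw [abs_lt]; constructor <;> linarith) (by linarith))
      refine ⟨c', c, h5.le, h6, ?_, L.symm _ _ h7⟩
      have : k ≤ c := by
        by_contra hck
        exact hk3 ⟨c, c', h1, by linarith, by linarith, h6, h7⟩
      rw [abs_lt]; constructor <;> linarith
    have r1 := K' hd L hinv hkr (clR_symm L he3)
    have r2 := K' hd L hinv hkr (clR_symm L hf3)
    exact hk3 ⟨e, f, he1, by linarith, by linarith, hf2, L.trans _ _ _ (L.symm _ _ r1) r2⟩
  rw [clR, closure_iff]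
  intro ε hε
  obtain ⟨ξ, hξ, x1, x2⟩ : ∃ ξ > 0, ξ < (t - s) / 2 ∧ ξ < ε :=
    ⟨min ((t - s) / 2) ε / 2, by have : 0 < t - s := by linarith
                                 positivity,
      by have := min_le_left ((t - s) / 2) ε; linarith, by have := min_le_right ((t - s) / 2) ε; linarith⟩
  obtain ⟨c, c', h1, h2, h3, h4, h5, h6, h7⟩ := cov_interval L hst1 (a := s + ξ) (b := t - ξ)
    (by linarith) (fun u hu hu' => hall u (by linarith) (by linarith))
  exact ⟨c, c', by rw [abs_lt]; constructor <;> linarith, by rw [abs_lt]; constructor <;> linarith, h7⟩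

lemma gap' {d : ℕ} (hd : 2 ≤ d) (L : RatLam)
    (hinv : ∀ x y, L.rel x y → L.rel (md d x) (md d y))
    {w : Set Circle1} (hw : IsUnlClass L.rel w) {s t : ℝ} (hst : s ≤ t)
    (hs : cc s ∈ closure w) (ht : cc t ∈ closure w) (hfree : ∀ u, s < u → u < t → cc u ∉ w) :
    realExt L.rel (cc s) (cc t) := by
  rcases hst.eq_or_lt with rfl | hst
  · exact Relation.EqvGen.refl _
  rcases lt_trichotomy t (s + 1) with h | rfl | h
  · exact Relation.EqvGen.rel _ _ (gap hd L hinv hw hst h hs ht hfree)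
  · rw [cc_add_one]; exact Relation.EqvGen.refl _
  · exfalso
    obtain ⟨θ, hθ⟩ := cls_ne L hw
    obtain ⟨l, h1, h2, rfl⟩ := lift_Ico θ s
    rcases h1.eq_or_lt with rfl | h1
    · exact hfree (s + 1) (by linarith) h (by rwa [cc_add_one])
    · exact hfree l h1 (by linarith) hθ

/-- finite unlinked classes are contained in real classes -/
lemma finite_cls {d : ℕ} (hd : 2 ≤ d) (L : RatLam)
    (hinv : ∀ x y, L.rel x y → L.rel (md d x) (md d y))
    {w : Set Circle1} (hw : IsUnlClass L.rel w) (hfin : w.Finite) {x y : Circle1} (hx : x ∈ w)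
    (hy : y ∈ w) : realExt L.rel x y := by
  obtain ⟨s, -, -, rfl⟩ := lift_Ico x 0
  obtain ⟨t, t1, t2, rfl⟩ := lift_Ico y s
  have hfinS : ({u | s ≤ u ∧ u ≤ t ∧ cc u ∈ w} : Set ℝ).Finite := by
    refine Set.Finite.of_finite_image (f := cc) (hfin.subset ?_) ?_
    · rintro _ ⟨u, hu, rfl⟩; exact hu.2.2
    · intro a ha b hb hab
      exact cc_inj hab (by rw [abs_lt]; constructor <;> linarith [ha.1, ha.2.1, hb.1, hb.2.1])
  obtain ⟨m, hm, hmax⟩ := Set.exists_max_image {u | (s ≤ u ∧ u ≤ t ∧ cc u ∈ w) ∧ realExt L.rel (cc s) (cc u)}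
    id (hfinS.subset fun u hu => hu.1) ⟨s, ⟨le_rfl, t1, hx⟩, Relation.EqvGen.refl _⟩
  rcases hm.1.2.1.eq_or_lt with rfl | hmt
  · exact hm.2
  exfalso
  obtain ⟨n, hn, hmin⟩ := Set.exists_min_image {u | (s ≤ u ∧ u ≤ t ∧ cc u ∈ w) ∧ m < u}
    id (hfinS.subset fun u hu => hu.1) ⟨t, ⟨t1, le_rfl, hy⟩, hmt⟩
  have := gap' hd L hinv hw hn.2.le (subset_closure hm.1.2.2) (subset_closure hn.1.2.2)
    (fun u h1 h2 h3 => absurd (hmin u ⟨⟨by linarith [hm.1.1], by linarith [hn.1.2.1], h3⟩, h1⟩)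
      (by simpa using h2))
  have := hmax n ⟨hn.1, Relation.EqvGen.trans _ _ _ hm.2 this⟩
  exact absurd hn.2 (by simpa using this)

lemma fib {d : ℕ} (hd : 2 ≤ d) {x y : Circle1} (hne : x ≠ y) (h : md d x = md d y) :
    ∃ s : ℝ, ∃ j : ℕ, 0 ≤ s ∧ s < 1 ∧ 0 < j ∧ j < d ∧ cc s = x ∧ cc (s + j / d) = y := by
  have hd0 : (0 : ℝ) < d := by positivity
  obtain ⟨s, hs0, hs1, rfl⟩ := lift_Ico x 0
  obtain ⟨t, ht0, ht1, rfl⟩ := lift_Ioo y s (Ne.symm hne)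
  rw [md_cc, md_cc] at h
  obtain ⟨n, hn⟩ := cc_eq_iff.1 h
  have hn0 : 0 < n := by
    have : (0 : ℝ) < n := by nlinarith
    exact_mod_cast this
  have hn1 : n < d := by
    have : (n : ℝ) < d := by nlinarith
    exact_mod_cast this
  lift n to ℕ using hn0.le
  refine ⟨s, n, hs0, by linarith, by exact_mod_cast hn0, by exact_mod_cast hn1, rfl, ?_⟩
  congr 1
  have : (d : ℝ) * t = d * s + n := by exact_mod_cast hn
  field_simp
  linarith

lemma V_finite {d : ℕ} (hd : 2 ≤ d) (L : RatLam) : {v | FatouCritElem d L.rel v}.Finite := by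
  have hd0 : (0 : ℝ) < d := by positivity
  have key : ∀ v : {v | FatouCritElem d L.rel v}, ∃ s : ℝ, ∃ j : ℕ, 0 ≤ s ∧ s < 1 ∧ 0 < j ∧ j < d ∧
      cc s ∈ v.1 ∧ cc (s + j / d) ∈ v.1 := by
    rintro ⟨v, hv1, hv2, hv3⟩
    simp only [InjOn, not_forall] at hv3
    obtain ⟨x, hx, y, hy, h, hne⟩ := hv3
    obtain ⟨s, j, h1, h2, h3, h4, rfl, rfl⟩ := fib hd hne h
    exact ⟨s, j, h1, h2, h3, h4, hx, hy⟩
  choose s j h0 h1 h2 h3 h4 h5 using key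
  have hk : ∀ v, ⌊s v * d⌋₊ < d := fun v => by
    rw [Nat.floor_lt (by have := h0 v; positivity)]
    have := h1 v
    nlinarith
  have aux : ∀ v v', ⌊s v * d⌋₊ = ⌊s v' * d⌋₊ → j v = j v' → s v ≤ s v' → v = v' := by
    intro v v' hf hj hle
    apply Subtype.ext
    rcases hle.eq_or_lt with he | hlt
    · exact cls_eq L v.2.1 v'.2.1 (h4 v) (he ▸ h4 v') (unl_refl (cls_irr L v.2.1 (h4 v)))
    have e1 := Nat.floor_le (show 0 ≤ s v * d by have := h0 v; positivity)
    have e2 := Nat.lt_floor_add_one (s v' * d)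
    rw [hf] at e1
    have hdiff : s v' - s v < 1 / d := by
      rw [lt_div_iff₀ hd0]; nlinarith
    have hj1 : 1 / (d : ℝ) ≤ j v / d := by
      gcongr; exact_mod_cast h2 v
    have hj2 : (j v : ℝ) / d + 1 / d ≤ 1 := by
      rw [← add_div, div_le_one hd0]; exact_mod_cast h3 v
    have hx := h5 v'
    rw [← hj] at hx
    refine cls_eq L v.2.1 v'.2.1 (h4 v) (h4 v') (unl_cross L hlt (c := s v + j v / d)
      (e := s v' + j v / d) (by linarith) (by linarith) (by linarith)
      ((cls_unl L v.2.1 (h4 v)).1 (h5 v)) ((cls_unl L v'.2.1 (h4 v')).1 hx))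
  have : Finite {v | FatouCritElem d L.rel v} := by
    refine Finite.of_injective (β := Fin d × Fin d) (fun v => (⟨⌊s v * d⌋₊, hk v⟩, ⟨j v, h3 v⟩)) ?_
    intro v v' h
    simp only [Prod.mk.injEq, Fin.mk.injEq] at h
    rcases le_total (s v) (s v') with hl | hl
    · exact aux v v' h.1 h.2 hl
    · exact (aux v' v h.1.symm h.2.symm hl).symm
  exact Set.toFinite _

def GG (w : Set Circle1) (f : Circle1 → Circle1) (τ a : Circle1) : Prop :=
  ∃ s t, cc t = τ ∧ cc s ∈ closure w ∧ f (cc s) = a ∧ ∀ u ∈ uIcc s t, u ≠ s → cc u ∉ w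

lemma G2 {w : Set Circle1} {x t : ℝ} (hx : cc x ∈ closure w) :
    ∃ s ∈ uIcc x t, cc s ∈ closure w ∧ ∀ u ∈ uIcc s t, u ≠ s → cc u ∉ w := by
  have hK : IsCompact (uIcc x t ∩ cc ⁻¹' closure w) :=
    isCompact_uIcc.inter_right (isClosed_closure.preimage cc_cont)
  obtain ⟨s, ⟨hs1, hs2⟩, hmin⟩ := hK.exists_isMinOn ⟨x, left_mem_uIcc, hx⟩
    (f := fun u => |u - t|) (by fun_prop)
  refine ⟨s, hs1, hs2, fun u hu hne huw => ?_⟩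
  have h1 : u ∈ uIcc x t := uIcc_subset_uIcc hs1 right_mem_uIcc hu
  have h2 : |s - t| ≤ |u - t| := hmin ⟨h1, subset_closure huw⟩
  rcases mem_uIcc.1 hu with ⟨h3, h4⟩ | ⟨h3, h4⟩
  · rw [abs_of_nonpos (by linarith), abs_of_nonpos (by linarith)] at h2
    exact hne (by linarith)
  · rw [abs_of_nonneg (by linarith), abs_of_nonneg (by linarith)] at h2
    exact hne (by linarith)

lemma G2' {w : Set Circle1} {f : Circle1 → Circle1} {x t : ℝ} (hx : cc x ∈ closure w) :
    ∃ s ∈ uIcc x t, cc s ∈ closure w ∧ GG w f (cc t) (f (cc s)) := by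
  obtain ⟨s, h1, h2, h3⟩ := G2 (t := t) hx
  exact ⟨s, h1, h2, s, t, rfl, h2, rfl, h3⟩

lemma G1 {d : ℕ} (hd : 2 ≤ d) (L : RatLam)
    (hinv : ∀ x y, L.rel x y → L.rel (md d x) (md d y))
    {w : Set Circle1} (hw : IsUnlClass L.rel w) {f : Circle1 → Circle1}
    (hf : ∀ x ∈ closure w, ∀ y ∈ closure w, f x = f y ↔ realExt L.rel x y)
    {τ a b : Circle1} (ha : GG w f τ a) (hb : GG w f τ b) : a = b := by
  obtain ⟨s, t, rfl, hs, rfl, h1⟩ := ha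
  obtain ⟨s', t', htt, hs', rfl, h2⟩ := hb
  obtain ⟨n, hn⟩ := cc_eq_iff.1 htt
  have hcs : cc (s' + n) = cc s' := cc_add_int _ _
  have h2' : ∀ u ∈ uIcc (s' + n) t, u ≠ s' + n → cc u ∉ w := by
    intro u hu hne
    have e : cc u = cc (u - n) := by rw [← cc_add_int (u - n) n]; congr 1; ring
    rw [e]
    refine h2 _ ?_ (fun h => hne (by linarith))
    rcases mem_uIcc.1 hu with ⟨h3, h4⟩ | ⟨h3, h4⟩
    · exact mem_uIcc.2 (Or.inl ⟨by linarith, by linarith⟩)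
    · exact mem_uIcc.2 (Or.inr ⟨by linarith, by linarith⟩)
  rw [← hcs] at hs' ⊢
  generalize s' + n = r at *
  have main : ∀ s r : ℝ, s ≤ r → cc s ∈ closure w → cc r ∈ closure w →
      (∀ u ∈ uIcc s t, u ≠ s → cc u ∉ w) → (∀ u ∈ uIcc r t, u ≠ r → cc u ∉ w) →
      f (cc s) = f (cc r) := by
    intro s r hsr hs hr h1 h2
    rw [hf _ hs _ hr]
    refine gap' hd L hinv hw hsr hs hr fun u h3 h4 => ?_
    rcases le_total u t with h5 | h5
    · exact h1 u (mem_uIcc.2 (Or.inl ⟨h3.le, h5⟩)) h3.ne'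
    · exact h2 u (mem_uIcc.2 (Or.inr ⟨h5, h4.le⟩)) h4.ne
  rcases le_total s r with h | h
  · exact main s r h hs hs' h1 h2'
  · exact (main r s h hs' hs h2' h1).symm

lemma G_free {w : Set Circle1} (hwne : w.Nonempty) {f : Circle1 → Circle1} {t t' : ℝ} (htt : t ≤ t')
    (hfree : ∀ u, t ≤ u → u ≤ t' → cc u ∉ w) : ∃ a, GG w f (cc t) a ∧ GG w f (cc t') a := by
  obtain ⟨x0, hx0⟩ := hwne
  obtain ⟨x, -, -, rfl⟩ := lift_Ico x0 0
  obtain ⟨s, h1, h2, h3⟩ := G2 (t := t) (subset_closure hx0)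
  refine ⟨f (cc s), ⟨s, t, rfl, h2, rfl, h3⟩, s, t', rfl, h2, rfl, fun u hu hne => ?_⟩
  by_cases hst : s ≤ t
  · rw [uIcc_of_le (by linarith)] at hu
    rcases le_total u t with h | h
    · exact h3 u (mem_uIcc.2 (Or.inl ⟨hu.1, h⟩)) hne
    · exact hfree u h hu.2
  · push Not at hst
    have : t' ≤ s := by
      by_contra hc
      push Not at hc
      obtain ⟨a, ha1, ha2⟩ := closure_set_iff.1 h2 (min (s - t) (t' - s)) (by
        apply lt_min <;> linarith)
      obtain ⟨ha3, ha4⟩ := lt_min_iff.1 ha1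
      rw [abs_lt] at ha3 ha4
      exact hfree a (by linarith) (by linarith) ha2
    rw [uIcc_of_ge this] at hu
    exact h3 u (mem_uIcc.2 (Or.inr ⟨by linarith [hu.1], hu.2⟩)) hne

lemma G_link1 (L : RatLam) {w : Set Circle1} (hw : IsUnlClass L.rel w) {f : Circle1 → Circle1}
    {P : Circle1 → Circle1 → Prop} (hP : ∀ x y, P x y → P y x)
    (hirr : ∀ x y, P x y → x ∉ w)
    (h : ∀ l t u t', P (cc t) (cc t') → l < t → t < u → u < t' →
      t' < l + 1 → cc l ∈ w → cc u ∈ w → False)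
    {x y : Circle1} (hxy : P x y) : ∃ a, GG w f x a ∧ GG w f y a := by
  obtain ⟨l0, hl0⟩ := cls_ne L hw
  obtain ⟨l, -, -, rfl⟩ := lift_Ico l0 0
  obtain ⟨t, ht1, ht2, rfl⟩ := lift_Ioo x l (by rintro rfl; exact hirr _ _ hxy hl0)
  obtain ⟨t', ht1', ht2', rfl⟩ := lift_Ioo y l (by rintro rfl; exact hirr _ _ (hP _ _ hxy) hl0)
  have main : ∀ t t', P (cc t) (cc t') → l < t → t ≤ t' → t' < l + 1 →
      ∃ a, GG w f (cc t) a ∧ GG w f (cc t') a := by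
    intro t t' hxy h1 h2 h3
    refine G_free (cls_ne L hw) h2 fun u h4 h5 h6 => ?_
    rcases h4.eq_or_lt with rfl | h4
    · exact hirr _ _ hxy h6
    rcases h5.eq_or_lt with rfl | h5
    · exact hirr _ _ (hP _ _ hxy) h6
    exact h l t u t' hxy h1 h4 h5 h3 hl0 h6
  rcases le_total t t' with h4 | h4
  · exact main t t' hxy ht1 h4 ht2'
  · obtain ⟨a, h1, h2⟩ := main t' t (hP _ _ hxy) ht1' h4 ht2
    exact ⟨a, h2, h1⟩

lemma n_zero {d : ℕ} {V : Set (Set Circle1)} {w : Set Circle1} (hw : w ∈ V) {n : ℕ}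
    (h : ∀ j < n, (md d)^[j] '' w ∉ V) : n = 0 := by
  by_contra hn
  exact h 0 (by omega) (by simpa using hw)

lemma G3 {d : ℕ} (lam0 : InvRatLam d) (T : TuningData d lam0)
    {w : Set Circle1} (hw : w ∈ T.V) {x y : Circle1}
    (h : tuningBase d lam0 T.V T.α T.lamv x y) :
    ∃ a b, GG w (T.α w) x a ∧ GG w (T.α w) y b ∧ (a = b ∨ (T.lamv w).rel a b) := by
  have hwc := ((T.hV w).1 hw).1
  rcases h with h | ⟨w2, n, h1, h2, h3, h4, hx, hy, hxr, hyr, hr⟩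
  · obtain ⟨a, ha, hb⟩ := G_link1 lam0.toRatLam hwc (f := T.α w) (P := lam0.rel) lam0.symm
      (fun x y h hx => cls_irr lam0.toRatLam hwc hx (lam0.rel_rat _ _ h).1) (by
        intro l t u t' h h1 h2 h3 h4 hl hu
        refine comp_sep h2 h3 (e := l + 1) (by linarith) (by linarith)
          (B := relClass lam0.rel (cc t)) (lam0.refl _ (lam0.rel_rat _ _ h).1) h ?_
        rw [cc_add_one]
        exact unl_comp lam0.toRatLam ((cls_unl lam0.toRatLam hwc hu).1 hl) (lam0.rel_rat _ _ h).1) h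
    exact ⟨a, a, ha, hb, Or.inl rfl⟩
  · by_cases hww : w2 = w
    · subst hww
      obtain rfl := n_zero hw h4
      simp only [iterate_zero, image_id, id] at hr
      obtain ⟨s, -, -, rfl⟩ := lift_Ico x 0
      obtain ⟨t, -, -, rfl⟩ := lift_Ico y 0
      refine ⟨_, _, ⟨s, s, rfl, hx, rfl, ?_⟩, ⟨t, t, rfl, hy, rfl, ?_⟩, Or.inr hr⟩
      · intro u hu hne; simp at hu; exact absurd hu hne
      · intro u hu hne; simp at hu; exact absurd hu hne
    · obtain ⟨a, ha, hb⟩ := G_link1 lam0.toRatLam hwc (f := T.α w)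
        (P := fun x y => x ∈ closure w2 ∧ y ∈ closure w2 ∧ x ∈ ratC ∧ y ∈ ratC)
        (fun x y h => ⟨h.2.1, h.1, h.2.2.2, h.2.2.1⟩)
        (fun x y h hx => cls_irr lam0.toRatLam hwc hx h.2.2.1) (by
          rintro l t u t' ⟨k1, k2, -, -⟩ h1' h2' h3' h4' hl hu
          obtain ⟨p, hp, hpw⟩ := closure_set_iff.1 k1 (min (t - l) (u - t)) (by
            apply lt_min <;> linarith)
          obtain ⟨q, hq, hqw⟩ := closure_set_iff.1 k2 (min (t' - u) (l + 1 - t')) (by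
            apply lt_min <;> linarith)
          obtain ⟨hp1, hp2⟩ := lt_min_iff.1 hp
          obtain ⟨hq1, hq2⟩ := lt_min_iff.1 hq
          rw [abs_lt] at hp1 hp2 hq1 hq2
          have := unl_cross lam0.toRatLam (a := l) (b := p) (c := u) (e := q) (by linarith)
            (by linarith) (by linarith) (by linarith) ((cls_unl lam0.toRatLam hwc hl).1 hu)
            ((cls_unl lam0.toRatLam h1 hpw).1 hqw)
          exact hww (cls_eq lam0.toRatLam hwc h1 hl hpw this).symm) ⟨hx, hy, hxr, hyr⟩
      exact ⟨a, a, ha, hb, Or.inl rfl⟩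

lemma G_ex {w : Set Circle1} (hwne : w.Nonempty) (f : Circle1 → Circle1) (τ : Circle1) :
    ∃ a, GG w f τ a := by
  obtain ⟨x0, hx0⟩ := hwne
  obtain ⟨x, -, -, rfl⟩ := lift_Ico x0 0
  obtain ⟨t, -, -, rfl⟩ := lift_Ico τ 0
  obtain ⟨s, -, -, h⟩ := G2' (f := f) (t := t) (subset_closure hx0)
  exact ⟨_, h⟩

lemma G4 {d : ℕ} (hd : 2 ≤ d) (lam0 : InvRatLam d) (T : TuningData d lam0)
    {w : Set Circle1} (hw : w ∈ T.V) {x y : Circle1}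
    (h : Relation.EqvGen (tuningBase d lam0 T.V T.α T.lamv) x y) {a b : Circle1}
    (ha : GG w (T.α w) x a) (hb : GG w (T.α w) y b) : a = b ∨ (T.lamv w).rel a b := by
  have hwc := ((T.hV w).1 hw).1
  have G1' := fun {τ a b} => G1 hd lam0.toRatLam (inv_rel lam0) hwc (T.hα_fib w hw)
    (τ := τ) (a := a) (b := b)
  induction h generalizing a b with
  | rel x y h =>
    obtain ⟨a', b', h1, h2, h3⟩ := G3 lam0 T hw h
    obtain rfl := G1' ha h1
    obtain rfl := G1' hb h2
    exact h3
  | refl x => exact Or.inl (G1' ha hb)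
  | symm x y h ih =>
    rcases ih hb ha with h | h
    · exact Or.inl h.symm
    · exact Or.inr ((T.lamv w).symm _ _ h)
  | trans x y z h1 h2 ih1 ih2 =>
    obtain ⟨c, hc⟩ := G_ex (cls_ne lam0.toRatLam hwc) (T.α w) y
    rcases ih1 ha hc with rfl | h
    · exact ih2 hc hb
    · rcases ih2 hc hb with rfl | h'
      · exact Or.inr h
      · exact Or.inr ((T.lamv w).trans _ _ _ h h')

lemma G_lim {d : ℕ} (lam0 : InvRatLam d) (T : TuningData d lam0)
    {w : Set Circle1} (hw : w ∈ T.V) {x : ℝ} (hx : cc x ∈ closure w) {U : Set Circle1}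
    (hU : U ∈ 𝓝 (T.α w (cc x))) :
    ∃ ε > 0, ∀ t, |t - x| < ε → ∃ a ∈ U, GG w (T.α w) (cc t) a := by
  have h1 := T.hα_cont w hw _ hx
  have h2 := (h1.tendsto hU)
  obtain ⟨O, hO, hO2⟩ := mem_nhdsWithin_iff_exists_mem_nhds_inter.1 h2
  obtain ⟨ε, hε, hb⟩ := Metric.mem_nhds_iff.1 (cc_cont.continuousAt hO)
  refine ⟨ε, hε, fun t ht => ?_⟩
  obtain ⟨s, h3, h4, h5⟩ := G2' (f := T.α w) (t := t) hx
  refine ⟨_, hO2 ⟨hb ?_, h4⟩, h5⟩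
  rw [Metric.mem_ball, Real.dist_eq]
  rw [abs_lt] at ht ⊢
  rcases mem_uIcc.1 h3 with ⟨h6, h7⟩ | ⟨h6, h7⟩ <;> constructor <;> linarith

lemma lemT {d : ℕ} (hd : 2 ≤ d) (lam0 : InvRatLam d) (T : TuningData d lam0)
    {w : Set Circle1} (hw : w ∈ T.V) {x y : Circle1} (hx : x ∈ closure w) (hy : y ∈ closure w)
    (h : clR (tuningRel d lam0 T.V T.α T.lamv) x y) :
    realExt (T.lamv w).rel (T.α w x) (T.α w y) := by
  by_cases hne : T.α w x = T.α w y
  · rw [hne]; exact Relation.EqvGen.refl _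
  refine Relation.EqvGen.rel _ _ ?_
  obtain ⟨s, -, -, rfl⟩ := lift_Ico x 0
  obtain ⟨t, -, -, rfl⟩ := lift_Ico y 0
  obtain ⟨U, V, hU, hV, hUV⟩ := t2_separation_nhds hne
  rw [mem_closure_iff_nhds]
  intro O hO
  obtain ⟨U', hU', V', hV', hO'⟩ := mem_nhds_prod_iff.1 hO
  obtain ⟨ε, hε, h1⟩ := G_lim lam0 T hw hx (Filter.inter_mem hU hU')
  obtain ⟨ε', hε', h1'⟩ := G_lim lam0 T hw hy (Filter.inter_mem hV hV')
  obtain ⟨a, b, h2, h3, -, -, h4⟩ := closure_iff.1 h (min ε ε') (by positivity)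
  obtain ⟨p, hp, hpG⟩ := h1 a (lt_of_lt_of_le h2 (min_le_left _ _))
  obtain ⟨q, hq, hqG⟩ := h1' b (lt_of_lt_of_le h3 (min_le_right _ _))
  rcases G4 hd lam0 T hw h4 hpG hqG with rfl | h5
  · exact (Set.disjoint_left.1 hUV hp.1 hq.1).elim
  · exact ⟨(p, q), hO' ⟨hp.2, hq.2⟩, h5⟩

lemma unl_mono {r r' : Circle1 → Circle1 → Prop} (h : ∀ x y, r x y → r' x y) {x y : Circle1}
    (hu : UnlRel r' x y) : UnlRel r x y :=
  ⟨hu.1, hu.2.1, hu.2.2.imp id fun h1 z hz =>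
    connectedComponentIn_mono _ (compl_subset_compl.2 fun t ht => h _ _ ht) (h1 z hz)⟩

lemma lemT' {d : ℕ} (hd : 2 ≤ d) (lam0 : InvRatLam d) (T : TuningData d lam0) (μ : InvRatLam d)
    (hμ : ∀ x y, μ.rel x y ↔ tuningRel d lam0 T.V T.α T.lamv x y)
    {w : Set Circle1} (hw : w ∈ T.V) {x y : Circle1}
    (h : realExt μ.rel x y) : 
    (x ∈ w ↔ y ∈ w) ∧ (x ∈ w → realExt (T.lamv w).rel (T.α w x) (T.α w y)) := by
  have hwc := ((T.hV w).1 hw).1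
  have hsub : ∀ x y, lam0.rel x y → μ.rel x y := fun x y h =>
    (hμ x y).2 ⟨(lam0.rel_rat _ _ h).1, (lam0.rel_rat _ _ h).2, Relation.EqvGen.rel _ _ (Or.inl h)⟩
  have hmr : (fun x y => μ.rel x y) = tuningRel d lam0 T.V T.α T.lamv := by
    funext x y; exact propext (hμ x y)
  have hmem : ∀ x y, clR μ.rel x y → x ∈ w → y ∈ w := by
    intro x y h hx
    have hxi := cls_irr lam0.toRatLam hwc hx
    have hyi : y ∉ ratC := fun hy =>
      hxi (K hd μ.toRatLam (inv_rel μ) hy (clR_symm μ.toRatLam h))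
    exact (cls_unl lam0.toRatLam hwc hx).2 (unl_mono hsub (clR_unl μ.toRatLam hxi hyi h))
  induction h with
  | rel x y h =>
    have h' : clR μ.rel x y := h
    refine ⟨⟨hmem x y h', hmem y x (clR_symm μ.toRatLam h')⟩, fun hx => ?_⟩
    refine lemT hd lam0 T hw (subset_closure hx) (subset_closure (hmem x y h' hx)) ?_
    rw [← hmr]; exact h
  | refl x => exact ⟨Iff.rfl, fun _ => Relation.EqvGen.refl _⟩
  | symm x y h ih => exact ⟨ih.1.symm, fun hx => (ih.2 (ih.1.2 hx)).symm⟩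
  | trans x y z h1 h2 ih1 ih2 =>
    exact ⟨ih1.1.trans ih2.1, fun hx => (ih1.2 hx).trans _ _ _ (ih2.2 (ih1.1.1 hx))⟩

lemma nrm_le (t : ℝ) : ‖cc t‖ ≤ |t| := by
  have := QuotientAddGroup.norm_mk_le_norm (S := AddSubgroup.zmultiples (1:ℝ)) (m := t)
  exact this

lemma nrm_lift (x : Circle1) : ∃ t, cc t = x ∧ |t| ≤ 1 / 2 ∧ ‖x‖ = |t| := by
  obtain ⟨t, h1, h2, rfl⟩ := lift_Ico x (-1/2)
  have h3 : |t| ≤ 1 / 2 := by rw [abs_le]; constructor <;> linarith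
  exact ⟨t, rfl, h3, (AddCircle.norm_coe_eq_abs_iff (p := 1) (x := t) one_ne_zero).2 (by simpa using h3)⟩

lemma nrm_mul {D : ℕ} (hD : 0 < D) {x : Circle1} (h : ‖x‖ < 1 / (2 * D)) :
    ‖D • x‖ = D * ‖x‖ := by
  have hD' : (0:ℝ) < D := by exact_mod_cast hD
  obtain ⟨t, rfl, h1, h2⟩ := nrm_lift x
  rw [h2] at h ⊢
  have e : D • cc t = cc (D * t) := md_cc D t
  rw [e]
  have h3 : |(D:ℝ) * t| = D * |t| := by rw [abs_mul, abs_of_pos hD']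
  rw [← h3]
  refine (AddCircle.norm_coe_eq_abs_iff (p := 1) (x := D * t) one_ne_zero).2 ?_
  rw [h3]
  rw [lt_div_iff₀ (by positivity)] at h
  simp; linarith

lemma expand {D : ℕ} (hD : 2 ≤ D) {e : ℕ → Circle1} (he : ∀ n, e (n + 1) = D • e n)
    (hne : ∀ n, e n ≠ 0) (n : ℕ) : ∃ m ≥ n, 1 / (2 * (D:ℝ)) ≤ ‖e m‖ := by
  by_contra hc
  push Not at hc
  have h1 : ∀ k, ‖e (n + k)‖ = D ^ k * ‖e n‖ := by
    intro k
    induction k with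
    | zero => simp
    | succ k ih =>
      rw [← add_assoc, he, nrm_mul (by omega) (hc _ (by omega)), ih, pow_succ]; ring
  have h2 : 0 < ‖e n‖ := norm_pos_iff.2 (hne n)
  obtain ⟨k, hk⟩ := pow_unbounded_of_one_lt (1 / ‖e n‖) (show (1:ℝ) < D by exact_mod_cast hD)
  rw [div_lt_iff₀ h2, ← h1] at hk
  have h3 := hc (n + k) (by omega)
  have h4 : 1 / (2 * (D:ℝ)) ≤ 1 := by
    have : (2:ℝ) ≤ D := by exact_mod_cast hD
    rw [div_le_one (by positivity)]; linarith
  linarith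

lemma eqv_ne {r : Circle1 → Circle1 → Prop} (hs : ∀ x y, r x y → r y x) {a b : Circle1}
    (h : Relation.EqvGen r a b) (hne : a ≠ b) : (∃ c, c ≠ a ∧ r a c) ∧ (∃ c, c ≠ b ∧ r b c) := by
  induction h with
  | rel x y h => exact ⟨⟨y, hne.symm, h⟩, ⟨x, hne, hs _ _ h⟩⟩
  | refl x => exact absurd rfl hne
  | symm x y h ih => exact (ih hne.symm).symm
  | trans x y z h1 h2 ih1 ih2 =>
    constructor
    · by_cases h : x = y
      · subst h; exact (ih2 hne).1
      · exact (ih1 h).1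
    · by_cases h : y = z
      · subst h; exact (ih1 hne).2
      · exact (ih2 h).2

lemma pcf_inj {d : ℕ} {r : Circle1 → Circle1 → Prop} (hp : PCFLam d r) {x y : Circle1}
    (hx : x ∉ ratC) (h : realExt r x y) (hne : x ≠ y) : md d x ≠ md d y := by
  intro he
  exact hx (hp {z | realExt r x z} ⟨x, rfl⟩ (fun hi => hne (hi (Relation.EqvGen.refl _) h he))
    (Relation.EqvGen.refl _))

lemma pcf_inj_iter {d : ℕ} (hd : 2 ≤ d) {r : Circle1 → Circle1 → Prop} (hp : PCFLam d r)
    (hinv : ∀ x y, r x y → r (md d x) (md d y)) {x y : Circle1}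
    (hx : x ∉ ratC) (h : realExt r x y) (hne : x ≠ y) (n : ℕ) : (md d)^[n] x ≠ (md d)^[n] y := by
  induction n generalizing x y with
  | zero => simpa
  | succ n ih =>
    rw [iterate_succ_apply, iterate_succ_apply]
    exact ih (fun h => hx ((md_ratC hd).1 h)) (realExt_md hinv h) (pcf_inj hp hx h hne)

lemma no_per {d : ℕ} (hd : 2 ≤ d) (L : RatLam) (hinv : ∀ x y, L.rel x y → L.rel (md d x) (md d y))
    (hp : PCFLam d L.rel) {v : Set Circle1} (hv : IsUnlClass L.rel v) {Q : ℕ} (hQ : 0 < Q)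
    (hper : (md d)^[Q] '' v ⊆ v) {z c : Circle1} (hz : z ∈ v) (hc : c ∈ v) (hne : z ≠ c)
    (h : clR L.rel z c) : False := by
  have hzi := cls_irr L hv hz
  set D := d ^ Q with hDdef
  have hD : 2 ≤ D := le_trans hd (Nat.le_self_pow (by omega) d)
  have hmem : ∀ x ∈ v, ∀ n : ℕ, (md d)^[Q * n] x ∈ v := by
    intro x hx n
    induction n with
    | zero => simpa
    | succ n ih =>
      rw [mul_add, mul_one, add_comm, iterate_add_apply]
      exact hper ⟨_, ih, rfl⟩
  set e : ℕ → Circle1 := fun n => (md d)^[Q * n] c - (md d)^[Q * n] z with he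
  have he1 : ∀ n, e (n + 1) = D • e n := by
    intro n
    simp only [he, md_iter]
    rw [smul_sub, smul_smul, smul_smul, mul_add, mul_one, pow_add, mul_comm (d ^ (Q * n))]
  have he2 : ∀ n, e n ≠ 0 := by
    intro n h0
    exact pcf_inj_iter hd hp hinv hzi (Relation.EqvGen.rel _ _ h) hne (Q * n) (sub_eq_zero.1 h0).symm
  have hclR : ∀ n, clR L.rel ((md d)^[n] z) ((md d)^[n] c) := by
    intro n
    exact iter_inv (r := clR L.rel) (fun x y h => clR_md hinv h) n h
  choose τ hτ0 hτ1 hτ using fun n => lift_Ico ((md d)^[Q * n] z) 0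
  have hInf : (τ '' {n | 1 / (2 * (D:ℝ)) ≤ ‖e n‖}).Infinite := by
    refine Set.Infinite.image ?_ ?_
    · intro m _ n _ hmn
      have : (md d)^[Q * m] z = (md d)^[Q * n] z := by rw [← hτ, ← hτ, hmn]
      exact Nat.eq_of_mul_eq_mul_left hQ (md_iter_inj hd hzi this)
    · rw [Set.infinite_iff_exists_gt]
      intro n
      obtain ⟨m, hm, h⟩ := expand hD he1 he2 (n + 1)
      exact ⟨m, h, by omega⟩
  have hD0 : (0:ℝ) < 1 / (2 * (D:ℝ)) := by
    have : (0:ℝ) < D := by exact_mod_cast (by omega : 0 < D)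
    positivity
  obtain ⟨_, ⟨k, -, rfl⟩, _, ⟨l, hl, rfl⟩, _, ⟨m, -, rfl⟩, h1, h2, h3⟩ := three_close hInf (by
    rintro _ ⟨n, -, rfl⟩; exact ⟨hτ0 n, by linarith [hτ1 n]⟩) hD0
  have hl' : 1 / (2 * (D:ℝ)) ≤ ‖e l‖ := hl
  obtain ⟨f, hf1, hf2, hf⟩ := lift_Ioo ((md d)^[Q * l] c) (τ l) (by
    rw [hτ]; intro h; exact he2 l (sub_eq_zero.2 h))
  have he3 : e l = cc (f - τ l) := by
    simp only [he]; rw [← hf, ← hτ]; rfl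
  have he4 : e l = cc (f - τ l - 1) := by
    rw [he3, ← cc_add_one (f - τ l - 1)]; congr 1; ring
  have b1 := nrm_le (f - τ l)
  have b2 := nrm_le (f - τ l - 1)
  rw [← he3, abs_of_nonneg (by linarith)] at b1
  rw [← he4, abs_of_nonpos (by linarith)] at b2
  refine one_side L (z := τ l) (u := τ m) (c := f) (u' := τ k + 1) h2 (by linarith) (by linarith)
    (by linarith) ?_ ?_
  · rw [hf, hτ]; exact hclR _
  · rw [cc_add_one, hτ, hτ]
    exact (cls_unl L hv (hmem z hz m)).1 (hmem z hz k)

lemma pre_irr {d : ℕ} (hd : 2 ≤ d) (lam0 : InvRatLam d) (T : TuningData d lam0)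
    (hp : PCFLam d lam0.rel) {w : Set Circle1} (hw : w ∈ T.V) {x : Circle1} (hx : x ∈ w)
    (ha : T.α w x ∈ ratC) : False := by
  let m : ℕ → ℕ := fun k => Nat.rec 0 (fun _ m => m + T.ret ((md d)^[m] '' w)) k
  have m0 : m 0 = 0 := rfl
  have ms : ∀ k, m (k + 1) = m k + T.ret ((md d)^[m k] '' w) := fun k => rfl
  have him : ∀ a b, (md d)^[a] '' ((md d)^[b] '' w) = (md d)^[b + a] '' w := by
    intro a b
    rw [← image_comp, ← iterate_add, add_comm]
  have hmV : ∀ k, (md d)^[m k] '' w ∈ T.V := by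
    intro k
    induction k with
    | zero => simpa [m0] using hw
    | succ k ih =>
      have := (T.hret _ ih).2.1
      rwa [him, ← ms] at this
  have hmult : ∀ k, T.α ((md d)^[m k] '' w) ((md d)^[m k] x) ∈ range fun n : ℕ => n • T.α w x := by
    intro k
    induction k with
    | zero => exact ⟨1, by simp [m0]⟩
    | succ k ih =>
      have h1 := T.hα_equiv _ (hmV k) ((md d)^[m k] x) (subset_closure ⟨x, hx, rfl⟩)
      rw [him, ← ms, ← iterate_add_apply, add_comm _ (m k), ← ms] at h1
      obtain ⟨n, hn⟩ := ih
      rw [h1, ← hn]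
      refine ⟨T.δf ((md d)^[m k] '' w) * n, ?_⟩
      simp only [md]; rw [mul_smul]
  have hmono : StrictMono m := strictMono_nat_of_lt_succ fun k => by
    rw [ms]; have := (T.hret _ (hmV k)).1; omega
  have hVfin : T.V.Finite := by
    have : T.V = {v | FatouCritElem d lam0.rel v} := by ext v; exact T.hV v
    rw [this]; exact V_finite hd lam0.toRatLam
  obtain ⟨k, -, l, -, hkl, he⟩ := Set.infinite_univ.exists_ne_map_eq_of_mapsTo
    (f := fun k : ℕ => ((md d)^[m k] '' w, T.α ((md d)^[m k] '' w) ((md d)^[m k] x)))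
    (t := T.V ×ˢ range fun n : ℕ => n • T.α w x) (fun k _ => ⟨hmV k, hmult k⟩)
    (hVfin.prod (fin_mult ha))
  wlog hlt : k < l generalizing k l
  · exact this l k hkl.symm he.symm (by omega)
  simp only [Prod.mk.injEq] at he
  obtain ⟨he1, he2⟩ := he
  rw [← he1] at he2
  have hmlt := hmono hlt
  set v := (md d)^[m k] '' w with hv
  have hvV := hmV k
  have hvc := ((T.hV v).1 hvV).1
  have hz : (md d)^[m k] x ∈ v := ⟨x, hx, rfl⟩
  have hz' : (md d)^[m l] x ∈ v := by rw [he1]; exact ⟨x, hx, rfl⟩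
  have hre := (T.hα_fib v hvV _ (subset_closure hz) _ (subset_closure hz')).1 he2
  have hne : (md d)^[m k] x ≠ (md d)^[m l] x := fun h =>
    hmlt.ne (md_iter_inj hd (cls_irr lam0.toRatLam ((T.hV w).1 hw).1 hx) h)
  obtain ⟨c, hc, hcl⟩ := (eqv_ne (fun x y h => clR_symm lam0.toRatLam h) hre hne).1
  have hcv : c ∈ v := (cls_unl lam0.toRatLam hvc hz).2
    (realExt_unl hd lam0.toRatLam (inv_rel lam0) (Relation.EqvGen.rel _ _ hcl)
      (cls_irr lam0.toRatLam hvc hz))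
  refine no_per hd lam0.toRatLam (inv_rel lam0) hp hvc (Q := m l - m k) (by omega) ?_ hz hcv
    hc.symm hcl
  rw [hv, him, Nat.add_sub_cancel' hmlt.le, ← he1]

theorem pcf_part {d : ℕ} (hd : 2 ≤ d) (lam0 : InvRatLam d) (T : TuningData d lam0)
    (hp : PCFLam d lam0.rel) (hpv : ∀ v ∈ T.V, PCFLam (T.δf v) (T.lamv v).rel) (μ : InvRatLam d)
    (hμ : ∀ x y, μ.rel x y ↔ tuningRel d lam0 T.V T.α T.lamv x y) : PCFLam d μ.rel := by
  rintro _ ⟨x0, rfl⟩ hni z hz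
  by_contra hzi
  simp only [InjOn, not_forall] at hni
  obtain ⟨x, hx, y, hy, he, hne⟩ := hni
  have hxy : realExt μ.rel x y := (Relation.EqvGen.symm _ _ hx).trans _ _ _ hy
  have hxz : realExt μ.rel x z := (Relation.EqvGen.symm _ _ hx).trans _ _ _ hz
  have hxi : x ∉ ratC := fun h =>
    hzi (μ.rel_rat _ _ ((realExt_rat hd μ.toRatLam (inv_rel μ) hxz).1 h)).2
  have hsub : ∀ x y, lam0.rel x y → μ.rel x y := fun x y h =>
    (hμ x y).2 ⟨(lam0.rel_rat _ _ h).1, (lam0.rel_rat _ _ h).2, Relation.EqvGen.rel _ _ (Or.inl h)⟩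
  have hu : UnlRel lam0.rel x y :=
    unl_mono hsub (realExt_unl hd μ.toRatLam (inv_rel μ) hxy hxi)
  set w := {t | UnlRel lam0.rel x t} with hw
  have hwc : IsUnlClass lam0.rel w := ⟨x, hxi, rfl⟩
  have hxw : x ∈ w := unl_refl hxi
  have hyw : y ∈ w := hu
  by_cases hfin : w.Finite
  · exact pcf_inj hp hxi (finite_cls hd lam0.toRatLam (inv_rel lam0) hwc hfin hxw hyw) hne he
  have hwV : w ∈ T.V := (T.hV w).2 ⟨hwc, hfin, fun h => hne (h hxw hyw he)⟩
  have hT := (lemT' hd lam0 T μ hμ hwV hxy).2 hxw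
  have hδ : md (T.δf w) (T.α w x) = md (T.δf w) (T.α w y) := by
    rw [← T.hα_equiv w hwV x (subset_closure hxw), ← T.hα_equiv w hwV y (subset_closure hyw)]
    congr 1
    obtain ⟨n, hn⟩ := Nat.exists_eq_succ_of_ne_zero (T.hret w hwV).1.ne'
    rw [hn, iterate_succ_apply, iterate_succ_apply, he]
  by_cases hα : T.α w x = T.α w y
  · exact pcf_inj hp hxi ((T.hα_fib w hwV _ (subset_closure hxw) _ (subset_closure hyw)).1 hα) hne he
  · refine pre_irr hd lam0 T hp hwV hxw ?_
    by_contra hai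
    exact pcf_inj (hpv w hwV) hai hT hα hδ

lemma hyp_pcf {d : ℕ} {r : Circle1 → Circle1 → Prop} (h : HyperbolicLam d r) : PCFLam d r :=
  fun A hA hn => absurd (h A hA) hn

lemma hyp_inj {d : ℕ} {r : Circle1 → Circle1 → Prop} (hp : HyperbolicLam d r) {x y : Circle1}
    (h : realExt r x y) (he : md d x = md d y) : x = y :=
  hp {z | realExt r x z} ⟨x, rfl⟩ (Relation.EqvGen.refl _) h he

lemma dw_unsep_aux {d : ℕ} (hd : 2 ≤ d) (lam0 : InvRatLam d) (hp : HyperbolicLam d lam0.rel)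
    {u u' : ℝ} (h1 : u < u') (h2 : u' < u + 1) (hu : UnlRel lam0.rel (cc u) (cc u'))
    {z : Circle1} (hz : z ∈ ratC) :
    cc (d * u') ∈ connectedComponentIn (relClass lam0.rel z)ᶜ (cc (d * u)) := by
  by_contra hn
  have hd0 : (0 : ℝ) < d := by positivity
  have hirr : ∀ t, cc t ∉ ratC → cc (d * t) ∉ ratC := fun t ht h => by
    rw [← md_cc] at h; exact ht ((md_ratC hd).1 h)
  have hdu : d * u < d * u' := by nlinarith
  set j := ⌊d * u' - d * u⌋₊ with hj
  have hj1 : (j : ℝ) ≤ d * u' - d * u := Nat.floor_le (by linarith)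
  have hj2 : d * u' - d * u < j + 1 := Nat.lt_floor_add_one _
  have hcj : cc (d * u + j) = cc (d * u) := by exact_mod_cast cc_add_int (d * u) j
  rw [← hcj] at hn
  obtain ⟨⟨b, hb1, hb2, hb⟩, ⟨b', hb1', hb2', hb'⟩⟩ := comp_not (by linarith) (by linarith)
    (fun h => hirr u hu.1 (by rw [← hcj]; exact (lam0.rel_rat _ _ h).2))
    (fun h => hirr u' hu.2.1 (lam0.rel_rat _ _ h).2) hn
  have key : ∀ i ∈ Finset.range (j + 1), ∃ m : ℕ, 1 ≤ m ∧ m ≤ j ∧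
      lam0.rel (cc ((b - i) / d)) (cc ((b' - m) / d)) := by
    intro i hi
    have hi' : (i : ℝ) ≤ j := by
      have := Finset.mem_range.1 hi
      exact_mod_cast (by omega : i ≤ j)
    have hx1 : u < (b - i) / d := by rw [lt_div_iff₀ hd0]; nlinarith
    have hx2 : (b - i) / d < u' := by
      rw [div_lt_iff₀ hd0]
      have : (0:ℝ) ≤ i := by positivity
      nlinarith
    set x := (b - i) / d with hx
    have hdx : md d (cc x) = cc b := by
      rw [md_cc, hx, mul_div_cancel₀ _ hd0.ne', sub_eq_add_neg]
      have := cc_add_int b (-i)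
      push_cast at this; exact this
    have hbr : cc b ∈ ratC := (lam0.rel_rat _ _ hb).2
    have hxr : cc x ∈ ratC := (md_ratC hd).1 (by rw [hdx]; exact hbr)
    have h3 := (lam0.invariant _ hxr).1
    have h4 : cc b' ∈ md d '' relClass lam0.rel (cc x) := by
      rw [h3, hdx]; exact lam0.trans _ _ _ (lam0.symm _ _ hb) hb'
    obtain ⟨y0, hy0, hy0'⟩ := h4
    have hy0r := (lam0.rel_rat _ _ hy0).2
    obtain ⟨t, ht1, ht2, rfl⟩ := lift_Ioo y0 u (by rintro rfl; exact hu.1 hy0r)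
    have ht3 : t < u' := by
      by_contra hc
      rcases (not_lt.1 hc).eq_or_lt with rfl | hc
      · exact hu.2.1 hy0r
      refine comp_sep hx2 hc ht2 (by linarith) (B := relClass lam0.rel (cc x))
        (lam0.refl _ hxr) hy0 ?_
      rw [cc_add_one]
      exact comp_symm (unl_comp lam0.toRatLam hu hxr)
    rw [md_cc] at hy0'
    obtain ⟨m, hm⟩ := cc_eq_iff.1 hy0'
    have g1 : d * u < d * t := by nlinarith
    have g2 : d * t < d * u' := by nlinarith
    have hm1 : 0 < m := by
      have : (0 : ℝ) < m := by linarith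
      exact_mod_cast this
    have hm2 : m < j + 1 := by
      have : (m : ℝ) < j + 1 := by linarith
      exact_mod_cast this
    lift m to ℕ using hm1.le
    refine ⟨m, by omega, by omega, ?_⟩
    have : (b' - m) / d = t := by
      rw [div_eq_iff hd0.ne']
      push_cast at hm; linarith
    rw [this]; exact hy0
  choose! m hm1 hm2 hm using key
  obtain ⟨i, hi, i', hi', hne, he⟩ := Finset.exists_ne_map_eq_of_card_lt_of_maps_to
    (s := Finset.range (j + 1)) (t := Finset.Icc 1 j) (by simp) (f := m)
    (fun i hi => by simp only [Finset.coe_Icc]; exact ⟨hm1 i hi, hm2 i hi⟩)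
  have hr := hm i hi
  rw [he] at hr
  have hr := lam0.trans _ _ _ hr (lam0.symm _ _ (hm i' hi'))
  have hmul : ∀ i : ℕ, md d (cc ((b - i) / d)) = cc b := by
    intro i
    rw [md_cc, mul_div_cancel₀ _ hd0.ne', sub_eq_add_neg]
    have := cc_add_int b (-i)
    push_cast at this; exact this
  have heq := hyp_inj hp (realExt_of_rel hr) (by rw [hmul, hmul])
  have hb3 : ∀ i ∈ Finset.range (j + 1), u < (b - i) / d ∧ (b - i) / d < u' := by
    intro i hi
    have hi' : (i : ℝ) ≤ j := by
      have := Finset.mem_range.1 hi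
      exact_mod_cast (by omega : i ≤ j)
    have : (0:ℝ) ≤ i := by positivity
    constructor
    · rw [lt_div_iff₀ hd0]; nlinarith
    · rw [div_lt_iff₀ hd0]; nlinarith
  have k1 := hb3 i hi
  have k2 := hb3 i' hi'
  have := cc_inj heq (by rw [abs_lt]; constructor <;> linarith)
  rw [div_left_inj' hd0.ne'] at this
  exact hne (by exact_mod_cast (by linarith : (i : ℝ) = i'))

lemma dw_unsep {d : ℕ} (hd : 2 ≤ d) (lam0 : InvRatLam d) (hp : HyperbolicLam d lam0.rel)
    {x y : Circle1} (hu : UnlRel lam0.rel x y) {z : Circle1} (hz : z ∈ ratC) :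
    md d y ∈ connectedComponentIn (relClass lam0.rel z)ᶜ (md d x) := by
  by_cases hxy : x = y
  · subst hxy
    refine mem_connectedComponentIn fun h => hu.1 ?_
    exact (md_ratC hd).1 (lam0.rel_rat _ _ h).2
  obtain ⟨u, -, -, rfl⟩ := lift_Ico x 0
  obtain ⟨u', h1, h2, rfl⟩ := lift_Ioo y u (Ne.symm hxy)
  rw [md_cc, md_cc]
  exact dw_unsep_aux hd lam0 hp h1 h2 hu hz

def RA (S : Set Circle1) (p : ℝ) : Prop := ∀ ε > 0, ∃ u, p < u ∧ u < p + ε ∧ cc u ∈ S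

lemma RA_int {S : Set Circle1} {p q : ℝ} (h : RA S p) (hpq : cc p = cc q) : RA S q := by
  obtain ⟨n, rfl⟩ := cc_eq_iff.1 hpq
  intro ε hε
  obtain ⟨u, h1, h2, h3⟩ := h ε hε
  exact ⟨u + n, by linarith, by linarith, by rwa [cc_add_int]⟩

lemma RA_mono {S S' : Set Circle1} {p : ℝ} (h : RA S p) (hs : S ⊆ S') : RA S' p := fun ε hε => by
  obtain ⟨u, h1, h2, h3⟩ := h ε hε
  exact ⟨u, h1, h2, hs h3⟩

lemma RA_md {d : ℕ} (hd : 2 ≤ d) {S : Set Circle1} {p : ℝ} (h : RA S p) : RA (md d '' S) (d * p) := by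
  have hd0 : (0 : ℝ) < d := by positivity
  intro ε hε
  obtain ⟨u, h1, h2, h3⟩ := h (ε / d) (by positivity)
  refine ⟨d * u, by nlinarith, ?_, cc u, h3, md_cc d u⟩
  have : d * u < d * (p + ε / d) := by nlinarith
  rwa [mul_add, mul_div_cancel₀ _ hd0.ne'] at this

lemma RA_eq (L : RatLam) {w w' : Set Circle1} (hw : IsUnlClass L.rel w) (hw' : IsUnlClass L.rel w')
    {p : ℝ} (h : RA w p) (h' : RA w' p) : w = w' := by
  obtain ⟨θ, hθ⟩ := cls_ne L hw
  obtain ⟨θ', hθ'⟩ := cls_ne L hw'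
  refine cls_eq L hw hw' hθ hθ' ⟨cls_irr L hw hθ, cls_irr L hw' hθ', Or.inr fun z hz => ?_⟩
  obtain ⟨ε, hε, hf⟩ := right_free (L.finiteClass z) p
  obtain ⟨u, h1, h2, h3⟩ := h ε hε
  obtain ⟨u', h1', h2', h3'⟩ := h' ε hε
  have k1 := unl_comp L ((cls_unl L hw hθ).1 h3) hz
  have k2 := unl_comp L ((cls_unl L hw' h3').1 hθ') hz
  refine comp_trans (comp_trans k1 ?_) k2
  rcases le_total u u' with hl | hl
  · exact conn hl fun t e1 e2 => hf t (by linarith) (by linarith)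
  · exact comp_symm (conn hl fun t e1 e2 => hf t (by linarith) (by linarith))

lemma RA_conn {J : Set Circle1} (hJ : IsPreconnected J) {p q : ℝ} (hp : cc p ∉ J) (hq : cc q ∉ J)
    (h : RA J p) (h' : RA J q) : cc p = cc q := by
  by_contra hne
  obtain ⟨r, h1, h2, h3⟩ := lift_Ioo (cc q) p (Ne.symm hne)
  have h'' := RA_int h' h3.symm
  obtain ⟨u, a1, a2, a3⟩ := h (r - p) (by linarith)
  obtain ⟨v, b1, b2, b3⟩ := h'' (p + 1 - r) (by linarith)
  rcases sep hJ a1 (by linarith) b1 (by linarith) a3 b3 with h | h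
  · exact hp h
  · rw [h3] at h; exact hq h

lemma touch {d : ℕ} (hd : 2 ≤ d) (L : RatLam)
    (hinv : ∀ x y, L.rel x y → L.rel (md d x) (md d y))
    {w : Set Circle1} (hw : IsUnlClass L.rel w) {y : Circle1} (hy : y ∈ ratC) (hyw : y ∈ closure w) :
    ∃ p, L.rel y (cc p) ∧ RA w p := by
  obtain ⟨s, -, -, rfl⟩ := lift_Ico y 0
  by_cases hR : RA w s
  · exact ⟨s, L.refl _ hy, hR⟩
  simp only [RA, not_forall, not_exists, not_and] at hR
  obtain ⟨ε, hε, hfree⟩ := hR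
  set ε' := min (ε / 2) 1 with hε'
  have e1 : ε' ≤ ε / 2 := min_le_left _ _
  have e2 : ε' ≤ 1 := min_le_right _ _
  have e3 : 0 < ε' := by positivity
  have hK : IsCompact (Icc (s + ε') (s + 1) ∩ cc ⁻¹' closure w) :=
    isCompact_Icc.inter_right (isClosed_closure.preimage cc_cont)
  obtain ⟨l, ⟨⟨hl1, hl2⟩, hlw⟩, hmin⟩ := hK.exists_isMinOn
    ⟨s + 1, ⟨by linarith, le_rfl⟩, by rw [mem_preimage, cc_add_one]; exact hyw⟩
    (f := fun u => u) continuousOn_id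
  have hfr : ∀ u, s < u → u < l → cc u ∉ w := by
    intro u h1 h2 h3
    by_cases h4 : u < s + ε
    · exact hfree u h1 h4 h3
    · have := hmin (a := u) ⟨⟨by linarith, by linarith⟩, subset_closure h3⟩
      exact absurd this (not_le.2 h2)
  have hsw : cc s ∉ w := fun h => cls_irr L hw h hy
  have hls : l < s + 1 := by
    by_contra hc
    have hl : l = s + 1 := le_antisymm hl2 (not_lt.1 hc)
    obtain ⟨θ, hθ⟩ := cls_ne L hw
    obtain ⟨t, h1, h2, rfl⟩ := lift_Ioo θ s (by rintro rfl; exact hsw hθ)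
    exact hfr t h1 (by linarith) hθ
  have hr := K' hd L hinv hy (gap hd L hinv hw (by linarith) hls hyw hlw hfr)
  refine ⟨l, hr, fun η hη => ?_⟩
  obtain ⟨a, ha1, ha2⟩ := closure_set_iff.1 hlw (min η (l - s)) (by apply lt_min <;> linarith)
  obtain ⟨ha3, ha4⟩ := lt_min_iff.1 ha1
  rw [abs_lt] at ha3 ha4
  refine ⟨a, ?_, by linarith, ha2⟩
  by_contra hc
  rcases (not_lt.1 hc).eq_or_lt with rfl | hc
  · exact cls_irr L hw ha2 (L.rel_rat _ _ hr).2
  · exact hfr a (by linarith) hc ha2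

lemma ra_inj {d : ℕ} (hd : 2 ≤ d) (lam0 : InvRatLam d) (hp : HyperbolicLam d lam0.rel)
    {w : Set Circle1} (hw : IsUnlClass lam0.rel w) (hi : InjOn (md d) w) {p q : ℝ}
    (h : RA w p) (h' : RA w q) (he : cc (d * p) = cc (d * q)) : cc p = cc q := by
  have hd0 : (0 : ℝ) < d := by positivity
  obtain ⟨u, hu1, hu2, huw⟩ := h' (1 / (2 * d)) (by positivity)
  obtain ⟨θ, ht1, ht2, htw⟩ := h (u - q) (by linarith)
  set c := q + (θ - p) with hc
  have hdc : cc (d * c) = cc (d * θ) := by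
    obtain ⟨n, hn⟩ := cc_eq_iff.1 he
    refine (cc_eq_iff.2 ⟨n, ?_⟩).symm
    rw [hc]; linear_combination hn
  suffices hcw : cc c ∈ w by
    have := hi htw hcw (by rw [md_cc, md_cc, hdc])
    obtain ⟨n, hn⟩ := cc_eq_iff.1 this
    exact cc_eq_iff.2 ⟨n, by linarith⟩
  by_contra hcw
  have hti := cls_irr lam0.toRatLam hw htw
  have hci : cc c ∉ ratC := fun hcr => by
    have := (md_ratC hd).2 hcr
    rw [md_cc, hdc, ← md_cc] at this
    exact hti ((md_ratC hd).1 this)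
  have hui := cls_irr lam0.toRatLam hw huw
  have hnu : ∃ z ∈ ratC, cc u ∉ connectedComponentIn (relClass lam0.rel z)ᶜ (cc c) := by
    by_contra hcon
    push Not at hcon
    exact hcw ((cls_unl lam0.toRatLam hw huw).2
      (unl_symm lam0.toRatLam ⟨hci, hui, Or.inr hcon⟩))
  obtain ⟨z, hz, hzn⟩ := hnu
  have hdd : 1 / (2 * (d:ℝ)) ≤ 1 := by
    have : (2:ℝ) ≤ d := by exact_mod_cast hd
    rw [div_le_one (by positivity)]; linarith
  obtain ⟨⟨b, hb1, hb2, hb⟩, ⟨b0, hb1', hb2', hb0⟩⟩ := comp_not (B := relClass lam0.rel z) (u := c)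
    (u' := u) (by linarith) (by linarith) (fun h => hci (lam0.rel_rat _ _ h).2)
    (fun h => hui (lam0.rel_rat _ _ h).2) hzn
  obtain ⟨u0, hu01, hu02, hu0w⟩ := h' (c - q) (by linarith)
  have hu0b : u0 < b0 - 1 := by
    by_contra hcon
    rcases (not_lt.1 hcon).eq_or_lt with h | h
    · have : cc u0 = cc b0 := by rw [← cc_add_one u0]; congr 1; linarith
      exact cls_irr lam0.toRatLam hw hu0w (this ▸ (lam0.rel_rat _ _ hb0).2)
    · refine comp_sep (a := b) (b := u) (c := b0) (e := u0 + 1) hb2 hb1' (by linarith) (by linarith)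
        (B := relClass lam0.rel z) hb hb0 ?_
      rw [cc_add_one]
      exact unl_comp lam0.toRatLam ((cls_unl lam0.toRatLam hw huw).1 hu0w) hz
  have hdB : ∀ t, cc t ∈ relClass lam0.rel z → cc (d * t) ∈ relClass lam0.rel (md d z) :=
    fun t ht => by rw [← md_cc]; exact inv_rel lam0 _ _ ht
  have hdist : d * u - d * u0 < 1 := by
    have : u - u0 < 1 / (2 * d) := by linarith
    rw [lt_div_iff₀ (by positivity)] at this
    nlinarith
  have hbb : cc (d * (b0 - 1)) = md d (cc b0) := by
    rw [← md_cc]; congr 1; rw [← cc_add_one]; congr 1; ring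
  refine comp_sep (a := d * (b0 - 1)) (b := d * c) (c := d * b) (e := d * u0 + 1) (by nlinarith)
    (by nlinarith) (by nlinarith) (by nlinarith) (B := relClass lam0.rel (md d z)) ?_ (hdB _ hb) ?_
  · rw [hbb]; exact inv_rel lam0 _ _ hb0
  · rw [cc_add_one, hdc, ← md_cc, ← md_cc]
    exact dw_unsep hd lam0 hp ((cls_unl lam0.toRatLam hw htw).1 hu0w) ((md_ratC hd).2 hz)

def Lk (d : ℕ) (lam0 : InvRatLam d) (T : TuningData d lam0) (w : Set Circle1) (x y : Circle1) : Prop :=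
  ∃ n : ℕ, IsUnlClass lam0.rel w ∧ w.Infinite ∧
      (md d)^[n] '' w ∈ T.V ∧ (∀ j < n, (md d)^[j] '' w ∉ T.V) ∧
      x ∈ closure w ∧ y ∈ closure w ∧ x ∈ ratC ∧ y ∈ ratC ∧
      (T.lamv ((md d)^[n] '' w)).rel
        (T.α ((md d)^[n] '' w) ((md d)^[n] x)) (T.α ((md d)^[n] '' w) ((md d)^[n] y))

lemma cl_img {d n : ℕ} {w : Set Circle1} {x : Circle1} (hx : x ∈ closure w) :
    (md d)^[n] x ∈ closure ((md d)^[n] '' w) :=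
  image_closure_subset_closure_image (md_iter_cont d n) ⟨x, hx, rfl⟩

lemma Lk_merge {d : ℕ} {lam0 : InvRatLam d} {T : TuningData d lam0} {w : Set Circle1}
    {x y x' y' : Circle1} (h : Lk d lam0 T w x y) (hr : lam0.rel y x') (h' : Lk d lam0 T w x' y') :
    Lk d lam0 T w x y' := by
  obtain ⟨n, a1, a2, a3, a4, a5, a6, a7, a8, a9⟩ := h
  obtain ⟨m, b1, b2, b3, b4, b5, b6, b7, b8, b9⟩ := h'
  obtain rfl : n = m := by
    rcases lt_trichotomy n m with h | h | h
    · exact absurd a3 (b4 n h)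
    · exact h
    · exact absurd b3 (a4 m h)
  refine ⟨n, a1, a2, a3, a4, a5, b6, a7, b8, (T.lamv _).trans _ _ _ a9 ?_⟩
  have : T.α ((md d)^[n] '' w) ((md d)^[n] y) = T.α ((md d)^[n] '' w) ((md d)^[n] x') :=
    (T.hα_fib _ a3 _ (cl_img a6) _ (cl_img b5)).2
      (realExt_of_rel (iter_inv (inv_rel lam0) n hr))
  rw [this]; exact b9

lemma Lk_symm {d : ℕ} {lam0 : InvRatLam d} {T : TuningData d lam0} {w : Set Circle1}
    {x y : Circle1} (h : Lk d lam0 T w x y) : Lk d lam0 T w y x := by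
  obtain ⟨n, a1, a2, a3, a4, a5, a6, a7, a8, a9⟩ := h
  exact ⟨n, a1, a2, a3, a4, a6, a5, a8, a7, (T.lamv _).symm _ _ a9⟩

lemma Lk_inj {d : ℕ} (hd : 2 ≤ d) {lam0 : InvRatLam d} {T : TuningData d lam0}
    (hp : HyperbolicLam d lam0.rel) (hpv : ∀ v ∈ T.V, HyperbolicLam (T.δf v) (T.lamv v).rel)
    {w : Set Circle1} {x y : Circle1} (h : Lk d lam0 T w x y) (hn : ¬ lam0.rel x y) :
    ¬ lam0.rel (md d x) (md d y) := by
  intro hr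
  obtain ⟨n, a1, a2, a3, a4, a5, a6, a7, a8, a9⟩ := h
  by_cases hwV : w ∈ T.V
  · obtain rfl := n_zero hwV a4
    simp only [iterate_zero, image_id, id] at a9
    obtain ⟨k, hk⟩ := Nat.exists_eq_succ_of_ne_zero (T.hret w hwV).1.ne'
    have hr2 : lam0.rel ((md d)^[T.ret w] x) ((md d)^[T.ret w] y) := by
      rw [hk, iterate_succ_apply, iterate_succ_apply]
      exact iter_inv (inv_rel lam0) k hr
    have h1 := (T.hα_fib _ (T.hret w hwV).2.1 _ (cl_img a5) _ (cl_img a6)).2 (realExt_of_rel hr2)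
    rw [T.hα_equiv w hwV x a5, T.hα_equiv w hwV y a6] at h1
    have h2 := hyp_inj (hpv w hwV) (realExt_of_rel a9) h1
    have h3 := (T.hα_fib w hwV _ a5 _ a6).1 h2
    exact hn ((realExt_rat hd lam0.toRatLam (inv_rel lam0) h3).1 a7)
  · have hi : InjOn (md d) w := by
      by_contra hi
      exact hwV ((T.hV w).2 ⟨a1, a2, hi⟩)
    obtain ⟨p, hp1, hp2⟩ := touch hd lam0.toRatLam (inv_rel lam0) a1 a7 a5
    obtain ⟨q, hq1, hq2⟩ := touch hd lam0.toRatLam (inv_rel lam0) a1 a8 a6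
    obtain ⟨θ, hθ⟩ := cls_ne lam0.toRatLam a1
    have hdr : md d x ∈ ratC := (md_ratC hd).2 a7
    have hsub : md d '' w ⊆ connectedComponentIn (relClass lam0.rel (md d x))ᶜ (md d θ) := by
      rintro _ ⟨t, ht, rfl⟩
      exact dw_unsep hd lam0 hp ((cls_unl lam0.toRatLam a1 hθ).1 ht) hdr
    have hpc : cc (d * p) ∈ relClass lam0.rel (md d x) := by
      rw [← md_cc]; exact inv_rel lam0 _ _ hp1
    have hqc : cc (d * q) ∈ relClass lam0.rel (md d x) := by
      rw [← md_cc]; exact lam0.trans _ _ _ hr (inv_rel lam0 _ _ hq1)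
    have he := RA_conn (J := connectedComponentIn (relClass lam0.rel (md d x))ᶜ (md d θ))
      isPreconnected_connectedComponentIn
      (fun h => connectedComponentIn_subset _ _ h hpc)
      (fun h => connectedComponentIn_subset _ _ h hqc)
      (RA_mono (RA_md hd hp2) hsub) (RA_mono (RA_md hd hq2) hsub)
    have := ra_inj hd lam0 hp a1 hi hp2 hq2 he
    rw [this] at hp1
    exact hn (lam0.trans _ _ _ hp1 (lam0.symm _ _ hq1))

inductive Ch (d : ℕ) (lam0 : InvRatLam d) (T : TuningData d lam0) :
    Circle1 → Circle1 → Set Circle1 → Prop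
  | one {x x' y' y w} : lam0.rel x x' → Lk d lam0 T w x' y' → ¬ lam0.rel x' y' → lam0.rel y' y →
      Ch d lam0 T x y w
  | cons {x x' y' y w w'} : lam0.rel x x' → Lk d lam0 T w x' y' → ¬ lam0.rel x' y' →
      Ch d lam0 T y' y w' → w' ≠ w → Ch d lam0 T x y w

lemma Ch_rel {d : ℕ} {lam0 : InvRatLam d} {T : TuningData d lam0} {w : Set Circle1}
    {x z y : Circle1} (h : lam0.rel x z) (hc : Ch d lam0 T z y w) : Ch d lam0 T x y w := by
  cases hc with
  | one h1 h2 h3 h4 => exact Ch.one (lam0.trans _ _ _ h h1) h2 h3 h4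
  | cons h1 h2 h3 h4 h5 => exact Ch.cons (lam0.trans _ _ _ h h1) h2 h3 h4 h5

lemma Ch_of_base {d : ℕ} {lam0 : InvRatLam d} {T : TuningData d lam0} {x y : Circle1}
    (hy : y ∈ ratC) (h : Relation.EqvGen (tuningBase d lam0 T.V T.α T.lamv) x y) :
    lam0.rel x y ∨ ∃ w, Ch d lam0 T x y w := by
  have hsymm : ∀ x y, tuningBase d lam0 T.V T.α T.lamv x y → tuningBase d lam0 T.V T.α T.lamv y x := by
    rintro x y (h | ⟨w, h⟩)
    · exact Or.inl (lam0.symm _ _ h)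
    · exact Or.inr ⟨w, Lk_symm h⟩
  have h1 : Relation.ReflTransGen (tuningBase d lam0 T.V T.α T.lamv) x y := by
    have : Std.Symm (tuningBase d lam0 T.V T.α T.lamv) := ⟨hsymm⟩
    rwa [Relation.EqvGen.eqvGen_eq_reflTransGen] at h
  clear h
  induction h1 using Relation.ReflTransGen.head_induction_on with
  | refl => exact Or.inl (lam0.refl _ hy)
  | @head x z h1 h2 ih =>
    have relcase : lam0.rel x z → lam0.rel x y ∨ ∃ w, Ch d lam0 T x y w := fun hr =>
      ih.imp (lam0.trans _ _ _ hr) (fun ⟨w, hw⟩ => ⟨w, Ch_rel hr hw⟩)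
    rcases h1 with h1 | ⟨w, h1⟩
    · exact relcase h1
    have h1 : Lk d lam0 T w x z := h1
    by_cases hr : lam0.rel x z
    · exact relcase hr
    have hxx : lam0.rel x x := lam0.refl _ (by obtain ⟨n, a1, a2, a3, a4, a5, a6, a7, a8, a9⟩ := h1; exact a7)
    rcases ih with ih | ⟨w', ih⟩
    · exact Or.inr ⟨w, Ch.one hxx h1 hr ih⟩
    by_cases hww : w' = w
    · subst hww
      cases ih with
      | @one _ x' y' _ _ k1 k2 k3 k4 =>
        have h3 := Lk_merge h1 k1 k2
        by_cases hr' : lam0.rel x y'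
        · exact Or.inl (lam0.trans _ _ _ hr' k4)
        · exact Or.inr ⟨w', Ch.one hxx h3 hr' k4⟩
      | @cons _ x' y' _ _ w2 k1 k2 k3 k4 k5 =>
        have h3 := Lk_merge h1 k1 k2
        by_cases hr' : lam0.rel x y'
        · exact Or.inr ⟨w2, Ch_rel hr' k4⟩
        · exact Or.inr ⟨w', Ch.cons hxx h3 hr' k4 k5⟩
    · exact Or.inr ⟨w, Ch.cons hxx h1 hr ih hww⟩

lemma Ch_touch {d : ℕ} {lam0 : InvRatLam d} {T : TuningData d lam0} {w : Set Circle1}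
    {x y : Circle1} (h : Ch d lam0 T x y w) :
    IsUnlClass lam0.rel w ∧ ∃ x', lam0.rel x x' ∧ x' ∈ closure w := by
  cases h with
  | one h1 h2 h3 h4 =>
    obtain ⟨n, a1, a2, a3, a4, a5, -⟩ := h2
    exact ⟨a1, _, h1, a5⟩
  | cons h1 h2 h3 h4 h5 =>
    obtain ⟨n, a1, a2, a3, a4, a5, -⟩ := h2
    exact ⟨a1, _, h1, a5⟩

lemma lim_comp {B S : Set Circle1} (hB : B.Finite) {y : Circle1} (hy : y ∉ B) (h : y ∈ closure S) :
    ∃ a ∈ S, a ∈ connectedComponentIn Bᶜ y := by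
  obtain ⟨s, -, -, rfl⟩ := lift_Ico y 0
  obtain ⟨ε, hε, hf⟩ := nhds_free hB hy
  obtain ⟨a, ha, haS⟩ := closure_set_iff.1 h ε hε
  rw [abs_lt] at ha
  refine ⟨cc a, haS, ?_⟩
  rcases le_total s a with hl | hl
  · exact conn hl fun t h1 h2 => hf t (by rw [abs_lt]; constructor <;> linarith)
  · exact comp_symm (conn hl fun t h1 h2 => hf t (by rw [abs_lt]; constructor <;> linarith))

lemma cls_comp (L : RatLam) {x y z : Circle1} (hn : ¬ L.rel x y) (hyz : L.rel y z) :
    z ∈ connectedComponentIn (relClass L.rel x)ᶜ y := by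
  obtain ⟨e, he, hs⟩ := L.unlinkedClass x y hn
  exact comp_trans (comp_symm (hs (L.refl _ (L.rel_rat _ _ hyz).1))) (hs hyz)

/-- image of a point of `closure w` is in the component of the image of `w` -/
lemma img_comp {d : ℕ} (hd : 2 ≤ d) (lam0 : InvRatLam d) (hp : HyperbolicLam d lam0.rel)
    {w : Set Circle1} (hw : IsUnlClass lam0.rel w) {x y θ : Circle1} (hx : x ∈ ratC)
    (hy : y ∈ closure w) (hθ : θ ∈ w) (hn : ¬ lam0.rel (md d x) (md d y)) :
    md d y ∈ connectedComponentIn (relClass lam0.rel (md d x))ᶜ (md d θ) := by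
  obtain ⟨_, ⟨t, ht, rfl⟩, h⟩ := lim_comp (lam0.finiteClass (md d x)) (y := md d y) hn
    (S := md d '' w) (image_closure_subset_closure_image (md_cont d) ⟨y, hy, rfl⟩)
  exact comp_trans (dw_unsep hd lam0 hp ((cls_unl lam0.toRatLam hw hθ).1 ht) ((md_ratC hd).2 hx))
    (comp_symm h)

lemma Ch_sep {d : ℕ} (hd : 2 ≤ d) {lam0 : InvRatLam d} {T : TuningData d lam0}
    (hp : HyperbolicLam d lam0.rel) (hpv : ∀ v ∈ T.V, HyperbolicLam (T.δf v) (T.lamv v).rel)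
    {w : Set Circle1} {x y : Circle1} (h : Ch d lam0 T x y w) :
    ∀ θ ∈ w, md d y ∈ connectedComponentIn (relClass lam0.rel (md d x))ᶜ (md d θ) := by
  induction h with
  | @one x x' y' y w h1 h2 h3 h4 =>
    intro θ hθ
    have hn := Lk_inj hd hp hpv h2 h3
    obtain ⟨n, a1, a2, a3, a4, a5, a6, a7, a8, a9⟩ := h2
    rw [relClass_eq lam0.toRatLam (inv_rel lam0 _ _ h1)]
    exact comp_trans (img_comp hd lam0 hp a1 a7 a6 hθ hn)
      (cls_comp lam0.toRatLam hn (inv_rel lam0 _ _ h4))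
  | @cons x x' y' y w w' h1 h2 h3 h4 h5 ih =>
    intro θ hθ
    have hn := Lk_inj hd hp hpv h2 h3
    have hn' : ¬ lam0.rel (md d y') (md d x') := fun h => hn (lam0.symm _ _ h)
    obtain ⟨n, a1, a2, a3, a4, a5, a6, a7, a8, a9⟩ := h2
    rw [relClass_eq lam0.toRatLam (inv_rel lam0 _ _ h1)]
    obtain ⟨hw', x'', hx'', hxw⟩ := Ch_touch h4
    have hx''r := (lam0.rel_rat _ _ hx'').2
    obtain ⟨p, hp1, hp2⟩ := touch hd lam0.toRatLam (inv_rel lam0) a1 a8 a6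
    obtain ⟨q, hq1, hq2⟩ := touch hd lam0.toRatLam (inv_rel lam0) hw' hx''r hxw
    have hq1 : lam0.rel y' (cc q) := lam0.trans _ _ _ hx'' hq1
    have hdy : md d y' ∈ ratC := (md_ratC hd).2 a8
    have hsub : ∀ {w : Set Circle1} (hw : IsUnlClass lam0.rel w) {θ} (hθ : θ ∈ w),
        md d '' w ⊆ connectedComponentIn (relClass lam0.rel (md d y'))ᶜ (md d θ) := by
      rintro w hw θ hθ _ ⟨t, ht, rfl⟩
      exact dw_unsep hd lam0 hp ((cls_unl lam0.toRatLam hw hθ).1 ht) hdy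
    have hpc : cc (d * p) ∈ relClass lam0.rel (md d y') := by
      rw [← md_cc]; exact inv_rel lam0 _ _ hp1
    have hqc : cc (d * q) ∈ relClass lam0.rel (md d y') := by
      rw [← md_cc]; exact inv_rel lam0 _ _ hq1
    -- a point of the image of `w'` near `d q`
    have hqB : md d (cc q) ∉ relClass lam0.rel (md d x') := fun h =>
      hn (lam0.trans _ _ _ h (lam0.symm _ _ (inv_rel lam0 _ _ hq1)))
    have hqcl : md d (cc q) ∈ closure (md d '' w') := by
      refine image_closure_subset_closure_image (md_cont d) ⟨_, closure_set_iff.2 fun ε hε => ?_, rfl⟩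
      obtain ⟨u, e1, e2, e3⟩ := hq2 ε hε
      exact ⟨u, by rw [abs_lt]; constructor <;> linarith, e3⟩
    obtain ⟨_, ⟨t, ht, rfl⟩, htc⟩ := lim_comp (lam0.finiteClass (md d x')) hqB hqcl
    -- components of images differ
    have hne : md d t ∉ connectedComponentIn (relClass lam0.rel (md d y'))ᶜ (md d θ) := by
      intro hcon
      have hs2 : md d '' w' ⊆ connectedComponentIn (relClass lam0.rel (md d y'))ᶜ (md d θ) := by
        rw [connectedComponentIn_eq hcon]; exact hsub hw' ht
      have he := RA_conn (J := connectedComponentIn (relClass lam0.rel (md d y'))ᶜ (md d θ))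
        isPreconnected_connectedComponentIn
        (fun h => connectedComponentIn_subset _ _ h hpc)
        (fun h => connectedComponentIn_subset _ _ h hqc)
        (RA_mono (RA_md hd hp2) (hsub a1 hθ)) (RA_mono (RA_md hd hq2) hs2)
      have hpq : cc p = cc q := hyp_inj hp
        (realExt_of_rel (lam0.trans _ _ _ (lam0.symm _ _ hp1) hq1)) (by rw [md_cc, md_cc, he])
      exact h5 (RA_eq lam0.toRatLam hw' a1 hq2 (RA_int hp2 hpq))
    have hE : connectedComponentIn (relClass lam0.rel (md d y'))ᶜ (md d t) ⊆
        (relClass lam0.rel (md d x'))ᶜ := by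
      intro b hb hbB
      have k1 := img_comp hd lam0 hp a1 a8 a5 hθ hn'
      have k2 := cls_comp lam0.toRatLam hn' hbB
      exact hne (comp_trans (comp_trans k1 k2) (comp_symm hb))
    have hyt := ih t ht
    have hyt2 : md d y ∈ connectedComponentIn (relClass lam0.rel (md d x'))ᶜ (md d t) :=
      isPreconnected_connectedComponentIn.subset_connectedComponentIn
        (mem_connectedComponentIn (connectedComponentIn_nonempty_iff.1 ⟨_, hyt⟩)) hE hyt
    exact comp_trans (comp_trans (comp_trans (img_comp hd lam0 hp a1 a7 a6 hθ hn)
      (cls_comp lam0.toRatLam hn (inv_rel lam0 _ _ hq1))) htc) hyt2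

theorem hyp_part {d : ℕ} (hd : 2 ≤ d) (lam0 : InvRatLam d) (T : TuningData d lam0)
    (hp : HyperbolicLam d lam0.rel) (hpv : ∀ v ∈ T.V, HyperbolicLam (T.δf v) (T.lamv v).rel)
    (μ : InvRatLam d)
    (hμ : ∀ x y, μ.rel x y ↔ tuningRel d lam0 T.V T.α T.lamv x y) : HyperbolicLam d μ.rel := by
  intro A hA
  by_contra hni
  have hsub := pcf_part hd lam0 T (hyp_pcf hp) (fun v hv => hyp_pcf (hpv v hv)) μ hμ A hA hni
  apply hni
  obtain ⟨x0, rfl⟩ := hA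
  intro x hx y hy he
  have hxy : realExt μ.rel x y := (Relation.EqvGen.symm _ _ hx).trans _ _ _ hy
  have hr := (hμ _ _).1 ((realExt_rat hd μ.toRatLam (inv_rel μ) hxy).1 (hsub hx))
  rcases Ch_of_base hr.2.1 hr.2.2 with h | ⟨w, h⟩
  · exact hyp_inj hp (realExt_of_rel h) he
  · exfalso
    obtain ⟨θ, hθ⟩ := cls_ne lam0.toRatLam (Ch_touch h).1
    have := Ch_sep hd hp hpv h θ hθ
    refine connectedComponentIn_subset _ _ this ?_
    rw [he]
    exact lam0.refl _ ((md_ratC hd).2 hr.2.1)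

end Proofs

/-- If `λ₀` and all the `λ_v` are post-critically finite, so is the
combinatorial tuning; if `λ₀` and all the `λ_v` are hyperbolic, so is the tuning. -/
theorem combinatorial_tuning_pcf_and_hyperbolic (d : ℕ) (hd : 2 ≤ d)
    (lam0 : InvRatLam d) (T : TuningData d lam0) :
    ((PCFLam d lam0.rel ∧ ∀ v ∈ T.V, PCFLam (T.δf v) (T.lamv v).rel) →
      ∀ μ : InvRatLam d,
        (∀ x y : Circle1, μ.rel x y ↔ tuningRel d lam0 T.V T.α T.lamv x y) →
        PCFLam d μ.rel) ∧
    ((HyperbolicLam d lam0.rel ∧ ∀ v ∈ T.V, HyperbolicLam (T.δf v) (T.lamv v).rel) →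
      ∀ μ : InvRatLam d,
        (∀ x y : Circle1, μ.rel x y ↔ tuningRel d lam0 T.V T.α T.lamv x y) →
        HyperbolicLam d μ.rel) := by
  exact ⟨fun h μ hμ => pcf_part hd lam0 T h.1 h.2 μ hμ,
    fun h μ hμ => hyp_part hd lam0 T h.1 h.2 μ hμ⟩
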